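/- arXiv:2012.11902 — 4 statements merged into one kernel-verified Lean document; each statement's English description precedes it below -/
import Mathlib

section
/- Let (Z,ρ,ℬ) and (Z',ρ',ℬ') be shadow decorated metric spaces, and suppose (Z,ρ) is bounded and uniformly perfect. Then for any shadow-respecting quasisymmetric embedding h:Z→Z', the snowflake exponents λ_a, for (a,r)∈ℬ, are uniformly bounded away from zero and infinity: there is α≥1 (depending on the quasisymmetry data) with 1/α ≤ λ_a ≤ α for all (a,r)∈ℬ. -/
noncomputable section

open Metric Set Filter

namespace RelHypPaper

/-! ## Coarse maps between metric spaces -/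

section CoarseMaps

variable {X : Type*} {X' : Type*} [PseudoMetricSpace X] [PseudoMetricSpace X']

/-- `f` is coarsely Lipschitz with constant `C`. -/
def CoarseLipschitzWith (C : ℝ) (f : X → X') : Prop :=
  ∀ x y : X, dist (f x) (f y) ≤ C * dist x y + C

def CoarselyLipschitz (f : X → X') : Prop :=
  ∃ C : ℝ, 0 < C ∧ CoarseLipschitzWith C f

/-- `f` is `τ`-uniformly proper. -/
def UniformlyProperWith (τ : ℝ → ℝ) (f : X → X') : Prop :=
  CoarselyLipschitz f ∧ Filter.Tendsto τ Filter.atTop Filter.atTop ∧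
    ∀ x y : X, τ (dist x y) ≤ dist (f x) (f y)

/-- quasi-isometric embedding with constants `Λ, μ`. -/
def QIEmbeddingWith (Λ μ : ℝ) (f : X → X') : Prop :=
  ∀ x y : X, dist x y / Λ - μ ≤ dist (f x) (f y) ∧ dist (f x) (f y) ≤ Λ * dist x y + μ

def QIEmbedding (f : X → X') : Prop :=
  ∃ Λ μ : ℝ, 1 ≤ Λ ∧ 0 ≤ μ ∧ QIEmbeddingWith Λ μ f

/-- `s` is `μ`-coarsely dense. -/
def CoarselyDense (μ : ℝ) (s : Set X) : Prop :=
  ∀ x : X, ∃ y ∈ s, dist x y ≤ μ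

/-- `f` is a quasi-isometry: a quasi-isometric embedding with coarsely dense image. -/
def QuasiIsometry (f : X → X') : Prop :=
  ∃ Λ μ : ℝ, 1 ≤ Λ ∧ 0 ≤ μ ∧ QIEmbeddingWith Λ μ f ∧ CoarselyDense μ (Set.range f)

/-- polynomially distorted map: coarsely Lipschitz with lower bound `d^α - C`. -/
def PolynomiallyDistorted (f : X → X') : Prop :=
  CoarselyLipschitz f ∧ ∃ α C : ℝ, α ∈ Set.Ioc (0:ℝ) 1 ∧ 0 < C ∧
    ∀ x y : X, dist x y ^ α - C ≤ dist (f x) (f y)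

/-- subexponentially distorted map. -/
def SubexponentiallyDistorted (f : X → X') : Prop :=
  CoarselyLipschitz f ∧ ∃ τ : ℝ → ℝ,
    Filter.Tendsto (fun t => τ t / Real.log t) Filter.atTop Filter.atTop ∧
    ∀ x y : X, τ (dist x y) ≤ dist (f x) (f y)

end CoarseMaps

/-! ## Geodesics, Gromov hyperbolicity, rays -/

section Geodesics

variable {X : Type*} [PseudoMetricSpace X]

/-- `γ` is a unit-speed geodesic from `x` to `y`, parametrised on `[0, dist x y]`. -/
def IsGeodesicFrom (γ : ℝ → X) (x y : X) : Prop :=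
  γ 0 = x ∧ γ (dist x y) = y ∧
    ∀ s ∈ Set.Icc (0:ℝ) (dist x y), ∀ t ∈ Set.Icc (0:ℝ) (dist x y),
      dist (γ s) (γ t) = |s - t|

/-- a geodesic metric space. -/
class GeodesicSpace (Y : Type*) [PseudoMetricSpace Y] : Prop where
  exists_geod : ∀ x y : Y, ∃ γ : ℝ → Y, IsGeodesicFrom γ x y

/-- the Gromov product of `x` and `y` at `o`. -/
def gromovProd (o x y : X) : ℝ := (dist o x + dist o y - dist x y) / 2

/-- `δ`-hyperbolicity (four point condition). -/
def GromovHyperbolicWith (δ : ℝ) (Y : Type*) [PseudoMetricSpace Y] : Prop :=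
  ∀ o x y z : Y, min (gromovProd o x y) (gromovProd o y z) - δ ≤ gromovProd o x z

def GromovHyperbolic (Y : Type*) [PseudoMetricSpace Y] : Prop :=
  ∃ δ : ℝ, 0 ≤ δ ∧ GromovHyperbolicWith δ Y

/-- a unit speed geodesic ray based at `o`. -/
def GeodesicRay (o : X) (γ : ℝ → X) : Prop :=
  γ 0 = o ∧ ∀ s t : ℝ, 0 ≤ s → 0 ≤ t → dist (γ s) (γ t) = |s - t|

/-- a bi-infinite unit speed geodesic. -/
def IsGeodesicLine (ℓ : ℝ → X) : Prop :=
  ∀ s t : ℝ, dist (ℓ s) (ℓ t) = |s - t|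

/-- the image of `γ₁` on `[0,∞)` lies within distance `C` of that of `γ₂`. -/
def WithinOf (C : ℝ) (γ₁ γ₂ : ℝ → X) : Prop :=
  ∀ t : ℝ, 0 ≤ t → ∃ s : ℝ, 0 ≤ s ∧ dist (γ₁ t) (γ₂ s) ≤ C

/-- two rays converge to the same point at infinity: their images on `[0,∞)`
are at finite Hausdorff distance. -/
def SameEndpoint (γ₁ γ₂ : ℝ → X) : Prop :=
  ∃ C : ℝ, WithinOf C γ₁ γ₂ ∧ WithinOf C γ₂ γ₁

/-- the Gromov product at `o` of the endpoints at infinity of two rays. -/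
def rayProd (o : X) (γ₁ γ₂ : ℝ → X) : ℝ :=
  Filter.liminf (fun t => gromovProd o (γ₁ t) (γ₂ t)) Filter.atTop

/-- a hyperbolic space is visual if every point is uniformly close to a
geodesic ray from the basepoint. -/
def Visual (Y : Type*) [PseudoMetricSpace Y] : Prop :=
  ∀ w : Y, ∃ C : ℝ, 0 ≤ C ∧ ∀ x : Y, ∃ γ : ℝ → Y, GeodesicRay w γ ∧
    ∃ t : ℝ, 0 ≤ t ∧ dist x (γ t) ≤ C

end Geodesics

/-! ## Boundaries at infinity with visual metrics -/

/-- A realisation of the Gromov boundary of `Y`, with a visual metric of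
parameter `ε` based at `o`: a metric space `Z` together with an assignment
`β` of boundary points to geodesic rays from `o`, which is surjective,
identifies exactly asymptotic rays, and whose metric is comparable to
`exp (-ε ·(Gromov product))`. -/
structure VisualBoundary (Y : Type*) [MetricSpace Y] where
  Z : Type*
  [metZ : MetricSpace Z]
  o : Y
  ε : ℝ
  C₀ : ℝ
  hε : 0 < ε
  hC₀ : 1 ≤ C₀
  β : (ℝ → Y) → Z
  surj : ∀ z : Z, ∃ γ : ℝ → Y, GeodesicRay o γ ∧ β γ = z
  eq_iff : ∀ γ₁ γ₂ : ℝ → Y, GeodesicRay o γ₁ → GeodesicRay o γ₂ →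
    (β γ₁ = β γ₂ ↔ SameEndpoint γ₁ γ₂)
  visual_le : ∀ γ₁ γ₂ : ℝ → Y, GeodesicRay o γ₁ → GeodesicRay o γ₂ →
    ¬ SameEndpoint γ₁ γ₂ →
    dist (β γ₁) (β γ₂) ≤ C₀ * Real.exp (-ε * rayProd o γ₁ γ₂)
  visual_ge : ∀ γ₁ γ₂ : ℝ → Y, GeodesicRay o γ₁ → GeodesicRay o γ₂ →
    ¬ SameEndpoint γ₁ γ₂ →
    Real.exp (-ε * rayProd o γ₁ γ₂) ≤ C₀ * dist (β γ₁) (β γ₂)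

attribute [instance] VisualBoundary.metZ

/-- `h` is the boundary map induced by `F`: the `F`-image of a ray representing
a boundary point `z` stays within bounded distance of any ray representing `h z`. -/
def InducesOnBoundary {Y Y' : Type*} [MetricSpace Y] [MetricSpace Y']
    (V : VisualBoundary Y) (V' : VisualBoundary Y') (F : Y → Y') (h : V.Z → V'.Z) : Prop :=
  ∀ γ γ' : ℝ → _, GeodesicRay V.o γ → GeodesicRay V'.o γ' → V'.β γ' = h (V.β γ) →
    ∃ C : ℝ, WithinOf C (fun t => F (γ t)) γ'

end RelHypPaper
namespace RelHypPaper

/-! ## Cusped spaces and relatively hyperbolic spaces -/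

/-- `s` is `k`-coarsely connected. -/
def CoarselyConnectedWith {X : Type*} [PseudoMetricSpace X] (k : ℝ) (s : Set X) : Prop :=
  ∀ x ∈ s, ∀ y ∈ s, ∃ (n : ℕ) (c : ℕ → X), c 0 = x ∧ c n = y ∧
    (∀ m ≤ n, c m ∈ s) ∧ ∀ m < n, dist (c m) (c (m + 1)) ≤ k

/-- The data of a cusped space for `(X, P)`: a proper geodesic space `Cusp`
containing (a uniformly properly embedded copy of) `X`, obtained by gluing to
each peripheral set `P i` a uniformly admissible horoball `Horo i`, foliated by
vertical geodesic rays `ray i x` based at the points `x` of a `C`-net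
`core i ⊆ P i`, satisfying the logarithmic distance formula of admissible
horoballs. -/
structure CuspedSpace (X : Type*) [MetricSpace X] {ι : Type*} (P : ι → Set X) where
  /-- the cusped space -/
  Cusp : Type*
  [metC : MetricSpace Cusp]
  /-- the uniform constant of the admissible horoballs and nets -/
  Cconst : ℝ
  /-- the uniform bi-Lipschitz constant of the admissible horoballs -/
  L : ℝ
  /-- the uniform coarse connectedness constant of the peripheral sets -/
  k : ℝ
  hC : 0 < Cconst
  hL : 1 ≤ L
  hk : 0 < k
  geodX : GeodesicSpace X
  properX : ProperSpace X
  conn : ∀ i, CoarselyConnectedWith k (P i)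
  /-- the inclusion of `X` into the cusped space -/
  incl : X → Cusp
  incl_inj : Function.Injective incl
  incl_short : ∀ x y : X, dist (incl x) (incl y) ≤ dist x y
  /-- the net `P̂ ⊆ P` along which the horoball is glued -/
  core : ι → Set X
  core_sub : ∀ i, core i ⊆ P i
  core_net : ∀ i, ∀ x ∈ P i, ∃ y ∈ core i, dist x y ≤ Cconst
  /-- the horoballs inside the cusped space -/
  Horo : ι → Set Cusp
  /-- the vertical geodesic rays of the horoballs -/
  ray : ι → X → ℝ → Cusp
  ray_zero : ∀ i, ∀ x ∈ core i, ray i x 0 = incl x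
  ray_isom : ∀ i, ∀ x ∈ core i, ∀ s t : ℝ, 0 ≤ s → 0 ≤ t →
    dist (ray i x s) (ray i x t) = |s - t|
  ray_mem : ∀ i, ∀ x ∈ core i, ∀ t : ℝ, 0 ≤ t → ray i x t ∈ Horo i
  horo_near_ray : ∀ i, ∀ p ∈ Horo i, ∃ x ∈ core i, ∃ t : ℝ, 0 ≤ t ∧
    dist p (ray i x t) ≤ Cconst
  core_lower : ∀ i, ∀ x ∈ core i, ∀ y ∈ core i,
    dist (incl x) (incl y) ≤ 1 → dist x y / L ≤ dist (incl x) (incl y)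
  /-- the logarithmic distance formula inside horoballs -/
  dist_formula : ∀ i, ∀ x ∈ core i, ∀ y ∈ core i, ∀ m n : ℝ, 0 ≤ m → 0 ≤ n →
    |dist (ray i x m) (ray i y n) -
      (2 * Real.log (dist x y * Real.exp (-(max m n)) + 1) + |m - n|)| ≤ Cconst
  /-- the cusped space is the union of `X` and the horoballs -/
  cusp_cover : ∀ p : Cusp, p ∈ Set.range incl ∨ ∃ i, p ∈ Horo i
  geodC : GeodesicSpace Cusp
  properC : ProperSpace Cusp

attribute [instance] CuspedSpace.metC

/-- `(X, P)` with a choice of cusped space is relatively hyperbolic when the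
cusped space is Gromov hyperbolic. -/
structure RelHypSpace (X : Type*) [MetricSpace X] {ι : Type*} (P : ι → Set X)
    extends CuspedSpace X P where
  δ : ℝ
  hδ : 0 ≤ δ
  hypC : GromovHyperbolicWith δ Cusp

/-- The boundary at infinity of a relatively hyperbolic space, together with its
shadow decoration: to each peripheral `P i` corresponds the parabolic point
`aP i`, namely the endpoint at infinity of the vertical rays of the horoball
`Horo i`. -/
structure BoundaryOf {X : Type*} [MetricSpace X] {ι : Type*} {P : ι → Set X}
    (RH : RelHypSpace X P) extends VisualBoundary RH.Cusp where
  /-- the parabolic points -/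
  aP : ι → Z
  aP_inj : Function.Injective aP
  aP_spec : ∀ i : ι, ∃ γ : ℝ → RH.Cusp, GeodesicRay o γ ∧ β γ = aP i ∧
    ∀ x ∈ RH.core i, SameEndpoint γ (RH.ray i x)
  shadow_le_diam : ∃ K : ℝ, 0 < K ∧ ∀ i : ι,
    ENNReal.ofReal (Real.exp (-ε * Metric.infDist o (RH.incl '' P i))) ≤
      ENNReal.ofReal K * EMetric.diam (Set.univ : Set Z)

/-- the radius of the shadow of the peripheral set `P i`. -/
def BoundaryOf.rP {X : Type*} [MetricSpace X] {ι : Type*} {P : ι → Set X}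
    {RH : RelHypSpace X P} (V : BoundaryOf RH) (i : ι) : ℝ :=
  Real.exp (-V.ε * Metric.infDist V.o (RH.incl '' P i))

/-- `(X,P)` is visually complete. -/
def VisuallyComplete {X : Type*} [MetricSpace X] {ι : Type*} {P : ι → Set X}
    (RH : RelHypSpace X P) : Prop :=
  ∀ w : RH.Cusp, ∃ C : ℝ, 0 ≤ C ∧ ∀ x : RH.Cusp,
    ∃ γa γb : ℝ → RH.Cusp, GeodesicRay w γa ∧ GeodesicRay w γb ∧
      ¬ SameEndpoint γa γb ∧
      (∃ t : ℝ, 0 ≤ t ∧ dist x (γa t) ≤ C) ∧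
      (∃ t : ℝ, 0 ≤ t ∧ dist x (γb t) ≤ C) ∧
      ∃ ℓ : ℝ → RH.Cusp, IsGeodesicLine ℓ ∧
        SameEndpoint (fun t => ℓ t) γa ∧ SameEndpoint (fun t => ℓ (-t)) γb ∧
        ∃ t : ℝ, dist x (ℓ t) ≤ C

end RelHypPaper
namespace RelHypPaper

/-! ## Shadow decorated spaces and quasisymmetric maps -/

/-- A shadow decoration on a metric space `Z`: a family of distinct points
`a i` with radii `r i > 0`, with `sup r ≼ diam Z`. -/
structure ShadowDecor (ι : Type*) (Z : Type*) [MetricSpace Z] where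
  a : ι → Z
  r : ι → ℝ
  a_inj : Function.Injective a
  r_pos : ∀ i, 0 < r i
  r_le_diam : ∃ K : ℝ, 0 < K ∧ ∀ i,
    ENNReal.ofReal (r i) ≤ ENNReal.ofReal K * EMetric.diam (Set.univ : Set Z)

/-- the shadow decoration on the boundary of a relatively hyperbolic space. -/
def BoundaryOf.decor {X : Type*} [MetricSpace X] {ι : Type*} {P : ι → Set X}
    {RH : RelHypSpace X P} (V : BoundaryOf RH) : ShadowDecor ι V.Z where
  a := V.aP
  r := V.rP
  a_inj := V.aP_inj
  r_pos := fun _ => Real.exp_pos _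
  r_le_diam := V.shadow_le_diam

/-- a distortion function: an increasing self-homeomorphism of `[0,∞)`. -/
def IsDistortionFun (η : ℝ → ℝ) : Prop :=
  η 0 = 0 ∧ (∀ t, 0 ≤ t → 0 ≤ η t) ∧ StrictMonoOn η (Set.Ici 0) ∧
    ContinuousOn η (Set.Ici 0) ∧ Filter.Tendsto η Filter.atTop Filter.atTop

/-- the `η`-quasisymmetry inequality. -/
def QSWith {Z Z' : Type*} [MetricSpace Z] [MetricSpace Z'] (η : ℝ → ℝ)
    (h : Z → Z') : Prop :=
  ∀ x y z : Z, ∀ t : ℝ, 0 ≤ t → dist x y ≤ t * dist x z →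
    dist (h x) (h y) ≤ η t * dist (h x) (h z)

/-- an (η-)quasisymmetric embedding. -/
def QSEmbedding {Z Z' : Type*} [MetricSpace Z] [MetricSpace Z'] (h : Z → Z') : Prop :=
  Function.Injective h ∧ ∃ η : ℝ → ℝ, IsDistortionFun η ∧ QSWith η h

/-- conditions (1), (2), (3) of a shadow-respecting quasisymmetric embedding,
with constant `C` and snowflake exponents `lam`. -/
structure ShadowRespectingWith {ι ι' Z Z' : Type*} [MetricSpace Z] [MetricSpace Z']
    (B : ShadowDecor ι Z) (B' : ShadowDecor ι' Z') (h : Z → Z')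
    (C : ℝ) (lam : ι → ℝ) : Prop where
  hC : 1 ≤ C
  lam_pos : ∀ i, 0 < lam i
  shadow_exists : ∀ i : ι, ∃ i' : ι', B'.a i' = h (B.a i)
  shadow_in : ∀ (i : ι) (i' : ι'), B'.a i' = h (B.a i) →
    ∀ b : Z, dist (B.a i) b ≤ B.r i → dist (B'.a i') (h b) ≤ C * B'.r i'
  shadow_out : ∀ (i : ι) (i' : ι'), B'.a i' = h (B.a i) →
    ∀ b : Z, B.r i ≤ dist (B.a i) b → B'.r i' ≤ C * dist (B'.a i') (h b)
  shadow_none : ∀ i' : ι', (¬ ∃ i : ι, B'.a i' = h (B.a i)) →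
    ∀ b : Z, B'.r i' / C ≤ dist (B'.a i') (h b)
  snowflake : ∀ (i : ι) (i' : ι'), B'.a i' = h (B.a i) → ∀ b c : Z,
    (dist (B.a i) b / B.r i) * dist (B.a i) b ≤ dist b c →
    dist b c ≤ dist (B.a i) b → dist (B.a i) b ≤ B.r i →
    (1 / C) * (dist b c / B.r i) ^ lam i ≤ dist (h b) (h c) / B'.r i' ∧
      dist (h b) (h c) / B'.r i' ≤ C * (dist b c / B.r i) ^ lam i

/-- a shadow-respecting quasisymmetric embedding. -/
def ShadowRespectingQS {ι ι' Z Z' : Type*} [MetricSpace Z] [MetricSpace Z']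
    (B : ShadowDecor ι Z) (B' : ShadowDecor ι' Z') (h : Z → Z') : Prop :=
  QSEmbedding h ∧ ∃ (C : ℝ) (lam : ι → ℝ), ShadowRespectingWith B B' h C lam

/-- a shadow-respecting quasisymmetric embedding which asymptotically
`lam₀`-snowflakes. -/
def ShadowRespectingQSSnowflake {ι ι' Z Z' : Type*} [MetricSpace Z] [MetricSpace Z']
    (B : ShadowDecor ι Z) (B' : ShadowDecor ι' Z') (h : Z → Z') (lam₀ : ℝ) : Prop :=
  QSEmbedding h ∧ ∃ C : ℝ, ShadowRespectingWith B B' h C (fun _ => lam₀)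

/-- a uniformly perfect metric space. -/
def UniformlyPerfect (Z : Type*) [MetricSpace Z] : Prop :=
  ∃ lam : ℝ, 1 < lam ∧ ∀ z : Z, ∀ r : ℝ, 0 < r →
    ENNReal.ofReal r ≤ EMetric.diam (Set.univ : Set Z) →
    (Metric.closedBall z r \ Metric.ball z (r / lam)).Nonempty

/-! ## Maps coarsely respecting peripheral structures -/

/-- `f` coarsely respects the peripheral structures `P`, `P'`. -/
def CoarselyRespectsPeripherals {X X' : Type*} [MetricSpace X] [MetricSpace X']
    {ι ι' : Type*} (P : ι → Set X) (P' : ι' → Set X') (f : X → X') : Prop :=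
  (∃ C : ℝ, 0 < C ∧ ∀ i : ι, ∃ i' : ι',
      f '' P i ⊆ Metric.cthickening C (P' i')) ∧
  (∀ C' : ℝ, 0 < C' → ∃ C : ℝ, 0 < C ∧ ∀ i' : ι',
      EMetric.diam (f ⁻¹' Metric.cthickening C' (P' i')) ≤ ENNReal.ofReal C ∨
      ∃ i : ι, f ⁻¹' Metric.cthickening C' (P' i') ⊆ Metric.cthickening C (P i))

/-- `f` is a snowflake on peripherals. -/
def SnowflakeOnPeripherals {X X' : Type*} [MetricSpace X] [MetricSpace X']
    {ι ι' : Type*} (P : ι → Set X) (P' : ι' → Set X') (f : X → X') : Prop :=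
  PolynomiallyDistorted f ∧ CoarselyRespectsPeripherals P P' f ∧
    ∃ C : ℝ, 0 < C ∧ ∀ i : ι, ∃ lam : ℝ, lam ∈ Set.Ioc (0:ℝ) 1 ∧
      ∀ x ∈ P i, ∀ y ∈ P i,
        (1 / C) * dist x y ^ lam - C ≤ dist (f x) (f y) ∧
        dist (f x) (f y) ≤ C * dist x y ^ lam + C

end RelHypPaper

namespace RelHypPaper

universe u₁ u₂ u₃ u₄

/-!
Inside the shadow of `B.a i`, the map `h` raises distances to the center, measured relative to the
radius of the shadow, to the power `lam i`, up to the factor `C`. Quasisymmetry controls how ratios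
of such distances are distorted: if a ratio lies in `[s, u]`, then `s ^ lam i ≤ C ^ 2 * η u`.
Uniform perfectness supplies two points of the shadow whose ratio of distances to the center is
about a prescribed `t`. Fix `t < 1` with `C ^ 2 * η t < 1`. The estimate for this ratio bounds
`lam i` below, and the one for the inverse ratio, which is about `t⁻¹`, bounds it above.
-/

open scoped Topology

section UniformlyPerfect

variable {Z : Type*} [MetricSpace Z] {L : ℝ}

/-- Uniform perfectness with an explicit constant `L`: `UniformlyPerfect Z` says that some `L`
has this property. -/
def UniformlyPerfectWith (L : ℝ) (Z : Type*) [MetricSpace Z] : Prop :=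
  1 < L ∧ ∀ z : Z, ∀ r : ℝ, 0 < r → ENNReal.ofReal r ≤ ediam (univ : Set Z) →
    (closedBall z r \ ball z (r / L)).Nonempty

namespace UniformlyPerfectWith

lemma exists_dist_mem_Icc (hZ : UniformlyPerfectWith L Z) {z y : Z} {r : ℝ} (hr : 0 < r)
    (hry : r ≤ dist z y) : ∃ b, dist z b ∈ Icc (r / L) r := by
  have hdiam : ENNReal.ofReal r ≤ ediam (univ : Set Z) := calc
    ENNReal.ofReal r ≤ edist z y := by
      rw [edist_dist]
      exact ENNReal.ofReal_le_ofReal hry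
    _ ≤ ediam univ := edist_le_ediam_of_mem (mem_univ z) (mem_univ y)
  obtain ⟨b, hbr, hbL⟩ := hZ.2 z r hr hdiam
  exact ⟨b, by simpa [dist_comm] using hbL, by simpa [dist_comm] using hbr⟩

lemma exists_dist_pos_le [Nontrivial Z] (hZ : UniformlyPerfectWith L Z) (z : Z) {r : ℝ}
    (hr : 0 < r) : ∃ b, 0 < dist z b ∧ dist z b ≤ r := by
  obtain ⟨y, hy⟩ := exists_ne z
  have hpos : 0 < min r (dist z y) := lt_min hr (dist_pos.2 hy.symm)
  obtain ⟨b, hlower, hupper⟩ := hZ.exists_dist_mem_Icc hpos (min_le_right r (dist z y))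
  exact ⟨b, (div_pos hpos (one_pos.trans hZ.1)).trans_le hlower,
    hupper.trans (min_le_left _ _)⟩

lemma exists_dist_div_dist_mem_Icc (hZ : UniformlyPerfectWith L Z) {z b : Z}
    (hb : 0 < dist z b) {t : ℝ} (ht : 0 < t) (ht1 : t ≤ 1) :
    ∃ c, dist z c / dist z b ∈ Icc (t / L) t := by
  obtain ⟨c, hlower, hupper⟩ :=
    hZ.exists_dist_mem_Icc (mul_pos ht hb) (mul_le_of_le_one_left hb.le ht1)
  refine ⟨c, (le_div_iff₀ hb).2 ?_, (div_le_iff₀ hb).2 hupper⟩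
  rwa [div_mul_eq_mul_div]

end UniformlyPerfectWith

end UniformlyPerfect

section SnowflakeExponents

variable {ι ι' Z Z' : Type*} [MetricSpace Z] [MetricSpace Z'] {B : ShadowDecor ι Z}
  {B' : ShadowDecor ι' Z'} {h : Z → Z'} {η : ℝ → ℝ} {C L : ℝ} {lam : ι → ℝ}

lemma ShadowDecor.nontrivial (B : ShadowDecor ι Z) (i : ι) : Nontrivial Z := by
  obtain ⟨K, -, hK⟩ := B.r_le_diam
  have hprod : 0 < ENNReal.ofReal K * ediam (univ : Set Z) :=
    (ENNReal.ofReal_pos.2 (B.r_pos i)).trans_le (hK i)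
  exact nontrivial_univ_iff.1 (ediam_pos_iff.1 (pos_of_mul_pos_right hprod zero_le))

lemma IsDistortionFun.tendsto_zero (hη : IsDistortionFun η) : Tendsto η (𝓝[>] 0) (𝓝 0) := by
  obtain ⟨hzero, -, -, hcont, -⟩ := hη
  simpa only [hzero] using
    (hcont 0 self_mem_Ici).tendsto.mono_left (nhdsWithin_mono 0 Ioi_subset_Ici_self)

lemma exists_mem_Ioo_sq_mul_lt_one (hη : Tendsto η (𝓝[>] 0) (𝓝 0)) (C : ℝ) :
    ∃ t ∈ Ioo (0 : ℝ) 1, C ^ 2 * η t < 1 := by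
  have hlim : Tendsto (fun t => C ^ 2 * η t) (𝓝[>] 0) (𝓝 0) := by
    simpa only [mul_zero] using hη.const_mul (C ^ 2)
  have hIoo : ∀ᶠ t in 𝓝[>] (0 : ℝ), t ∈ Ioo 0 1 := Ioo_mem_nhdsGT one_pos
  exact (hIoo.and (hlim.eventually_lt_const one_pos)).exists

namespace ShadowRespectingWith

lemma snowflake_center (H : ShadowRespectingWith B B' h C lam) {i : ι} {i' : ι'}
    (hi' : B'.a i' = h (B.a i)) {b : Z} (hb : dist (B.a i) b ≤ B.r i) :
    (1 / C) * (dist (B.a i) b / B.r i) ^ lam i ≤ dist (h (B.a i)) (h b) / B'.r i' ∧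
      dist (h (B.a i)) (h b) / B'.r i' ≤ C * (dist (B.a i) b / B.r i) ^ lam i := by
  have hratio : dist (B.a i) b / B.r i * dist (B.a i) b ≤ dist (B.a i) b :=
    mul_le_of_le_one_left dist_nonneg ((div_le_one (B.r_pos i)).2 hb)
  simpa only [dist_comm b, dist_comm (h b)] using
    H.snowflake i i' hi' b (B.a i) (by rwa [dist_comm b]) (dist_comm _ _).le hb

lemma rpow_div_dist_le (H : ShadowRespectingWith B B' h C lam) (hqs : QSWith η h) {i : ι}
    {b c : Z} {u : ℝ} (hb : dist (B.a i) b ≤ B.r i) (hc : dist (B.a i) c ≤ B.r i)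
    (hcpos : 0 < dist (B.a i) c) (hu : dist (B.a i) b / dist (B.a i) c ≤ u) :
    (dist (B.a i) b / dist (B.a i) c) ^ lam i ≤ C ^ 2 * η u := by
  obtain ⟨i', hi'⟩ := H.shadow_exists i
  have hr := B.r_pos i
  have hr' := B'.r_pos i'
  have hC : 0 < C := one_pos.trans_le H.hC
  obtain ⟨hblower, -⟩ := H.snowflake_center hi' hb
  obtain ⟨hclower, hcupper⟩ := H.snowflake_center hi' hc
  have hcpow : 0 < (dist (B.a i) c / B.r i) ^ lam i := by positivity
  have hqs_u : dist (h (B.a i)) (h b) ≤ η u * dist (h (B.a i)) (h c) :=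
    hqs _ _ _ _ (le_trans (by positivity) hu) ((div_le_iff₀ hcpos).1 hu)
  have hcimage : 0 < dist (h (B.a i)) (h c) :=
    (div_pos_iff_of_pos_right hr').1 (lt_of_lt_of_le (by positivity) hclower)
  have hηu : 0 ≤ η u := nonneg_of_mul_nonneg_left (dist_nonneg.trans hqs_u) hcimage
  rw [← div_div_div_cancel_right₀ hr.ne', Real.div_rpow (by positivity) (by positivity),
    div_le_iff₀ hcpow]
  calc (dist (B.a i) b / B.r i) ^ lam i
      ≤ C * (dist (h (B.a i)) (h b) / B'.r i') := by
        rwa [one_div, inv_mul_le_iff₀ hC] at hblower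
    _ ≤ C * (η u * dist (h (B.a i)) (h c) / B'.r i') := by gcongr
    _ = C * η u * (dist (h (B.a i)) (h c) / B'.r i') := by ring
    _ ≤ C * η u * (C * (dist (B.a i) c / B.r i) ^ lam i) := by gcongr
    _ = C ^ 2 * η u * (dist (B.a i) c / B.r i) ^ lam i := by ring

lemma rpow_exponent_le (H : ShadowRespectingWith B B' h C lam) (hqs : QSWith η h) {i : ι}
    {b c : Z} {s u : ℝ} (hb : dist (B.a i) b ≤ B.r i) (hc : dist (B.a i) c ≤ B.r i)
    (hcpos : 0 < dist (B.a i) c) (hs : 0 ≤ s)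
    (hsu : dist (B.a i) b / dist (B.a i) c ∈ Icc s u) : s ^ lam i ≤ C ^ 2 * η u :=
  (Real.rpow_le_rpow hs hsu.1 (H.lam_pos i).le).trans (H.rpow_div_dist_le hqs hb hc hcpos hsu.2)

lemma rpow_exponent_le_of_uniformlyPerfectWith (H : ShadowRespectingWith B B' h C lam)
    (hqs : QSWith η h) (hZ : UniformlyPerfectWith L Z) (i : ι) {t : ℝ} (ht : t ∈ Ioo 0 1) :
    (t / L) ^ lam i ≤ C ^ 2 * η t ∧ t⁻¹ ^ lam i ≤ C ^ 2 * η (t / L)⁻¹ := by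
  have := B.nontrivial i
  have htL : 0 < t / L := div_pos ht.1 (one_pos.trans hZ.1)
  obtain ⟨b, hbpos, hb⟩ := hZ.exists_dist_pos_le (B.a i) (B.r_pos i)
  obtain ⟨c, hcb⟩ := hZ.exists_dist_div_dist_mem_Icc hbpos ht.1 ht.2.le
  have hcpos : 0 < dist (B.a i) c :=
    (div_pos_iff_of_pos_right hbpos).1 (htL.trans_le hcb.1)
  have hc : dist (B.a i) c ≤ B.r i :=
    ((div_le_one hbpos).1 (hcb.2.trans ht.2.le)).trans hb
  have hbc : dist (B.a i) b / dist (B.a i) c ∈ Icc t⁻¹ (t / L)⁻¹ := by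
    rw [← inv_div (dist (B.a i) c)]
    exact ⟨inv_anti₀ (div_pos hcpos hbpos) hcb.2, inv_anti₀ htL hcb.1⟩
  exact ⟨H.rpow_exponent_le hqs hc hb hbpos htL.le hcb,
    H.rpow_exponent_le hqs hb hc hcpos (inv_nonneg.2 ht.1.le) hbc⟩

lemma exponent_le_and_inv_exponent_le (H : ShadowRespectingWith B B' h C lam)
    (hqs : QSWith η h) (hZ : UniformlyPerfectWith L Z) (i : ι) {t : ℝ} (ht : t ∈ Ioo 0 1)
    (hηt : C ^ 2 * η t < 1) :
    lam i ≤ Real.log (C ^ 2 * η (t / L)⁻¹) / Real.log t⁻¹ ∧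
      (lam i)⁻¹ ≤ Real.log (t / L) / Real.log (C ^ 2 * η t) := by
  obtain ⟨hlower, hupper⟩ := H.rpow_exponent_le_of_uniformlyPerfectWith hqs hZ i ht
  have htL : 0 < t / L := div_pos ht.1 (one_pos.trans hZ.1)
  have htinv : 0 < t⁻¹ := inv_pos.2 ht.1
  have hηpos : 0 < C ^ 2 * η t := (Real.rpow_pos_of_pos htL _).trans_le hlower
  have hηinvpos : 0 < C ^ 2 * η (t / L)⁻¹ := (Real.rpow_pos_of_pos htinv _).trans_le hupper
  constructor
  · rw [le_div_iff₀ (Real.log_pos ((one_lt_inv₀ ht.1).2 ht.2))]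
    exact (Real.rpow_le_iff_le_log htinv hηinvpos).1 hupper
  · rw [le_div_iff_of_neg (Real.log_neg hηpos hηt), le_inv_mul_iff₀ (H.lam_pos i)]
    exact (Real.rpow_le_iff_le_log htL hηpos).1 hlower

end ShadowRespectingWith

end SnowflakeExponents

theorem snowflake_exponents_uniformly_bounded_general {η : ℝ → ℝ}
    (hη : Tendsto η (𝓝[>] 0) (𝓝 0)) (C L : ℝ) :
    ∃ α : ℝ, 1 ≤ α ∧
      ∀ (ι : Type u₁) (ι' : Type u₂) (Z : Type u₃) (Z' : Type u₄)
        [MetricSpace Z] [MetricSpace Z']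
        (B : ShadowDecor ι Z) (B' : ShadowDecor ι' Z') (h : Z → Z') (lam : ι → ℝ),
        UniformlyPerfectWith L Z → QSWith η h → ShadowRespectingWith B B' h C lam →
        ∀ i : ι, 1 / α ≤ lam i ∧ lam i ≤ α := by
  obtain ⟨t, ht, hηt⟩ := exists_mem_Ioo_sq_mul_lt_one hη C
  let upper := Real.log (C ^ 2 * η (t / L)⁻¹) / Real.log t⁻¹
  let invUpper := Real.log (t / L) / Real.log (C ^ 2 * η t)
  refine ⟨max 1 (max upper invUpper), le_max_left _ _, ?_⟩
  intro ι ι' Z Z' _ _ B B' h lam hZ hqs H i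
  obtain ⟨hupper, hinv⟩ := H.exponent_le_and_inv_exponent_le hqs hZ i ht hηt
  refine ⟨?_, hupper.trans ((le_max_left _ _).trans (le_max_right _ _))⟩
  rw [one_div]
  exact inv_le_of_inv_le₀ (H.lam_pos i)
    (hinv.trans ((le_max_right _ _).trans (le_max_right _ _)))

/-- **Proposition 2.13.** If `(Z,ρ)` is bounded and uniformly perfect, the
snowflake exponents of any shadow-respecting quasisymmetric embedding
`h : Z → Z'` are uniformly bounded away from `0` and `∞`, with bound `α`
depending only on the quasisymmetry data `(η, C)` and on the geometric data
(`lamUP`, `D`) of `Z`. -/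
theorem snowflake_exponents_uniformly_bounded
    (η : ℝ → ℝ) (C lamUP D : ℝ)
    (hη : IsDistortionFun η) (hC : 1 ≤ C) (hlamUP : 1 < lamUP) (hD : 0 < D) :
    ∃ α : ℝ, 1 ≤ α ∧
      ∀ (ι : Type u₁) (ι' : Type u₂) (Z : Type u₃) (Z' : Type u₄)
        [MetricSpace Z] [MetricSpace Z']
        (B : ShadowDecor ι Z) (B' : ShadowDecor ι' Z') (h : Z → Z') (lam : ι → ℝ),
        -- `Z` is bounded, with diameter at most `D`
        Bornology.IsBounded (Set.univ : Set Z) →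
        Metric.diam (Set.univ : Set Z) ≤ D →
        -- `Z` is uniformly perfect with constant `lamUP`
        (∀ z : Z, ∀ r : ℝ, 0 < r →
          ENNReal.ofReal r ≤ EMetric.diam (Set.univ : Set Z) →
          (Metric.closedBall z r \ Metric.ball z (r / lamUP)).Nonempty) →
        -- `h` is an `η`-quasisymmetric embedding which is shadow-respecting
        -- with constant `C` and snowflake exponents `lam`
        Function.Injective h → QSWith η h →
        ShadowRespectingWith B B' h C lam →
        ∀ i : ι, 1 / α ≤ lam i ∧ lam i ≤ α := by
  obtain ⟨α, hα, hbound⟩ := snowflake_exponents_uniformly_bounded_general hη.tendsto_zero C lamUP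
  exact ⟨α, hα, fun ι ι' Z Z' _ _ B B' h lam _ _ hUP _ hqs H =>
    hbound ι ι' Z Z' B B' h lam ⟨hlamUP, hUP⟩ hqs H⟩

end RelHypPaper
end
end

section
/- Let Y and Y' be geodesic metric spaces with Y' Gromov hyperbolic. If f:Y→Y' is a subexponentially distorted map, then f is a quasi-isometric embedding, with quasi-isometry constants depending only on the distortion data of f and the hyperbolicity constant of Y'. -/
noncomputable section

open Metric Set Filter

namespace RelHypPaper

universe u v

/-! For `x y : Y'` and `r ∈ [0, dist x y]`, the distance from `z` to the point at distance `r` from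
`x` on a geodesic `[x, y]` agrees up to a multiple of `δ` with
`max (dist x z - r) (dist y z - (dist x y - r))`. This expression makes sense without geodesics, and
adjoining such a virtual point to `Y'` preserves the four point condition, so `Y'` need not be
geodesic.

Let `D` be, up to `1`, the least radius such that every virtual point of `[f x, f y]` is within `D`
of the image of `f`, and let `p` be a virtual point not within `D - 1` of it. Image points close to
the virtual points at distance `2 * D` from `p` on either side (or `f x` and `f y` themselves, if
the segment is too short) are at mutual distance `O(D)`, so their preimages are at distance at most
`exp (ε * O(D) + B)`, where subexponential distortion makes `ε` as small as we like. Repeatedly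
taking midpoints in `Y` joins these preimages by a chain of unit steps, and the four point condition
costs one `δ` per halving: the Gromov product of the two images at `p` is at least
`D - O(δ * ε * D) - O(1)`. But `p` lies between them, so this product is at most `δ` once `D`
exceeds `1 + δ`; hence `D` is bounded. Walking along `[f x, f y]` in unit steps and pulling back
nearby image points then bounds `dist x y` linearly in `dist (f x) (f y)`. -/

section Growth

theorem exists_le_exp_of_tendsto_div_log {τ : ℝ → ℝ}
    (hτ : Tendsto (fun t => τ t / Real.log t) atTop atTop) {ε : ℝ} (hε : 0 < ε) :
    ∃ B : ℝ, 0 ≤ B ∧ ∀ t s : ℝ, 0 ≤ s → τ t ≤ s → t ≤ Real.exp (ε * s + B) := by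
  obtain ⟨T, hT⟩ := eventually_atTop.1 (hτ.eventually_ge_atTop ε⁻¹)
  have hT₁ : 0 < max T 1 := lt_max_of_lt_right one_pos
  have hB : 0 ≤ Real.log (max T 1) := Real.log_nonneg (le_max_right T 1)
  refine ⟨Real.log (max T 1), hB, fun t s hs hts => ?_⟩
  have hεs : 0 ≤ ε * s := mul_nonneg hε.le hs
  rcases le_or_gt t (max T 1) with ht | ht
  · calc t ≤ Real.exp (Real.log (max T 1)) := ht.trans_eq (Real.exp_log hT₁).symm
      _ ≤ Real.exp (ε * s + Real.log (max T 1)) := Real.exp_le_exp.2 (by linarith)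
  · have hlog : 0 < Real.log t := Real.log_pos ((le_max_right T 1).trans_lt ht)
    have hτt : ε⁻¹ * Real.log t ≤ s :=
      ((le_div_iff₀ hlog).1 (hT t ((le_max_left T 1).trans ht.le))).trans hts
    have hlog_le : Real.log t ≤ ε * s := (inv_mul_le_iff₀ hε).1 hτt
    calc t = Real.exp (Real.log t) := (Real.exp_log (hT₁.trans ht)).symm
      _ ≤ Real.exp (ε * s + Real.log (max T 1)) := Real.exp_le_exp.2 (by linarith)

theorem exists_exp_le_two_pow {s : ℝ} (hs : 0 ≤ s) :
    ∃ k : ℕ, Real.exp s ≤ 2 ^ k ∧ (k : ℝ) ≤ 2 * s + 1 := by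
  obtain ⟨n, hn, hn'⟩ := exists_nat_pow_near (Real.one_le_exp hs) one_lt_two
  refine ⟨n + 1, hn'.le, ?_⟩
  have hlog : n * Real.log 2 ≤ s := by
    rw [← Real.log_pow]
    exact (Real.log_le_iff_le_exp (by positivity)).2 hn
  have hlog_two : (1 / 2 : ℝ) ≤ Real.log 2 := by linarith [Real.log_two_gt_d9]
  have hhalf : n * (1 / 2 : ℝ) ≤ n * Real.log 2 := by gcongr
  push_cast
  linarith

end Growth

section Midpoints

variable {Y : Type*} [PseudoMetricSpace Y]

/-- Any two points have a metric midpoint. Among complete metric spaces this characterises the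
geodesic ones. -/
def HasMidpoints (Y : Type*) [PseudoMetricSpace Y] : Prop :=
  ∀ a b : Y, ∃ m : Y, dist a m = dist a b / 2 ∧ dist m b = dist a b / 2

theorem GeodesicSpace.hasMidpoints [GeodesicSpace Y] : HasMidpoints Y := by
  intro a b
  obtain ⟨γ, hγa, hγb, hγ⟩ := GeodesicSpace.exists_geod a b
  have hd : 0 ≤ dist a b := dist_nonneg
  have hleft := hγ 0 ⟨le_rfl, hd⟩ (dist a b / 2) ⟨by linarith, by linarith⟩
  have hright := hγ (dist a b / 2) ⟨by linarith, by linarith⟩ (dist a b) ⟨hd, le_rfl⟩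
  rw [hγa, abs_of_nonpos (by linarith)] at hleft
  rw [hγb, abs_of_nonpos (by linarith)] at hright
  exact ⟨γ (dist a b / 2), by linarith, by linarith⟩

variable {P : Y → Y → ℝ} {δ m : ℝ}

theorem HasMidpoints.sub_le_of_dist_le_two_pow (hY : HasMidpoints Y)
    (hP : ∀ a b c, min (P a b) (P b c) - δ ≤ P a c) (hm : ∀ a b, dist a b ≤ 1 → m ≤ P a b)
    (k : ℕ) (a b : Y) (hab : dist a b ≤ 2 ^ k) : m - k * δ ≤ P a b := by
  induction k generalizing a b with
  | zero => simpa using hm a b (by simpa using hab)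
  | succ k ih =>
    obtain ⟨c, hac, hcb⟩ := hY a b
    rw [pow_succ] at hab
    have hmin : m - k * δ ≤ min (P a c) (P c b) :=
      le_min (ih a c (by linarith)) (ih c b (by linarith))
    push_cast
    linarith [hP a c b]

theorem HasMidpoints.sub_le_of_dist_le_exp (hY : HasMidpoints Y) (hδ : 0 ≤ δ)
    (hP : ∀ a b c, min (P a b) (P b c) - δ ≤ P a c) (hm : ∀ a b, dist a b ≤ 1 → m ≤ P a b)
    {s : ℝ} (hs : 0 ≤ s) {a b : Y} (hab : dist a b ≤ Real.exp s) :
    m - (2 * s + 1) * δ ≤ P a b := by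
  obtain ⟨k, hk, hks⟩ := exists_exp_le_two_pow hs
  calc m - (2 * s + 1) * δ ≤ m - k * δ := by gcongr
    _ ≤ P a b := hY.sub_le_of_dist_le_two_pow hP hm k a b (hab.trans hk)

end Midpoints

theorem dist_le_of_unit_steps {Y : Type*} [PseudoMetricSpace Y] {u : ℝ → Y} {K l : ℝ}
    (hK : 0 ≤ K) (hl : 0 ≤ l)
    (hu : ∀ r ∈ Icc 0 l, ∀ r' ∈ Icc 0 l, |r - r'| ≤ 1 → dist (u r) (u r') ≤ K) :
    dist (u 0) (u l) ≤ (l + 1) * K := by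
  have hmem (k : ℕ) : min (k : ℝ) l ∈ Icc 0 l := ⟨le_min k.cast_nonneg hl, min_le_right _ _⟩
  have hstep (k : ℕ) : dist (u (min k l)) (u (min ↑(k + 1) l)) ≤ K := by
    refine hu _ (hmem k) _ (hmem (k + 1)) ?_
    simpa using abs_min_sub_min_le_max (k : ℝ) l ↑(k + 1) l
  have hsum := dist_le_range_sum_of_dist_le (f := fun k : ℕ => u (min k l)) ⌈l⌉₊
    fun {k} _ => hstep k
  rw [Nat.cast_zero, min_eq_left hl, min_eq_right (Nat.le_ceil l), Finset.sum_const,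
    Finset.card_range, nsmul_eq_mul] at hsum
  calc dist (u 0) (u l) ≤ ⌈l⌉₊ * K := hsum
    _ ≤ (l + 1) * K := by gcongr; exact (Nat.ceil_lt_add_one hl).le

section VirtualPoints

variable {X : Type*} [PseudoMetricSpace X] {δ : ℝ}

theorem GromovHyperbolicWith.four_point (hX : GromovHyperbolicWith δ X) (x y z w : X) :
    dist x y + dist z w ≤ max (dist x z + dist y w) (dist x w + dist y z) + 2 * δ := by
  have h := hX z x w y
  unfold gromovProd at h
  rw [dist_comm z x, dist_comm z y, dist_comm w y, sub_le_iff_le_add, min_le_iff] at h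
  rw [← sub_le_iff_le_add, le_max_iff]
  rcases h with h | h
  · right; linarith
  · left; linarith

/-- The distance from `z` to the virtual point at distance `r` from `x` on a segment from `x`
to `y`. In a tree this is the distance to the actual point of the segment. -/
def segmentDist (x y : X) (r : ℝ) (z : X) : ℝ :=
  max (dist x z - r) (dist y z - (dist x y - r))

/-- The Gromov product of `z` and `w` based at the virtual point at distance `r` from `x` on a
segment from `x` to `y`. -/
def segmentProd (x y : X) (r : ℝ) (z w : X) : ℝ :=
  (segmentDist x y r z + segmentDist x y r w - dist z w) / 2

/-- Every virtual point of the segment from `x` to `y` is within `D` of the set `E`. -/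
def CoversSegment (E : Set X) (x y : X) (D : ℝ) : Prop :=
  ∀ r ∈ Icc 0 (dist x y), ∃ z ∈ E, segmentDist x y r z ≤ D

theorem segmentDist_symm (x y : X) (r : ℝ) (z : X) :
    segmentDist y x (dist x y - r) z = segmentDist x y r z := by
  rw [segmentDist, segmentDist, max_comm, dist_comm y x, sub_sub_cancel]

theorem segmentDist_left (x y : X) (r : ℝ) : segmentDist x y r x = |r| := by
  rw [segmentDist, dist_self, dist_comm y x, sub_sub_cancel, zero_sub, max_comm]
  rfl

theorem segmentDist_right (x y : X) (r : ℝ) : segmentDist x y r y = |dist x y - r| := by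
  rw [← segmentDist_symm, segmentDist_left]

theorem dist_left_le_segmentDist_add (x y : X) (r : ℝ) (z : X) :
    dist x z ≤ segmentDist x y r z + r :=
  sub_le_iff_le_add.1 (le_max_left _ _)

theorem dist_right_le_segmentDist_add (x y : X) (r : ℝ) (z : X) :
    dist y z ≤ segmentDist x y r z + (dist x y - r) :=
  sub_le_iff_le_add.1 (le_max_right _ _)

theorem segmentDist_nonneg (x y : X) (r : ℝ) (z : X) : 0 ≤ segmentDist x y r z := by
  linarith [dist_left_le_segmentDist_add x y r z, dist_right_le_segmentDist_add x y r z,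
    dist_triangle_right x y z]

theorem GromovHyperbolicWith.dist_le_segmentDist_add (hX : GromovHyperbolicWith δ X) (x y : X)
    (r r' : ℝ) (z w : X) :
    dist z w ≤ segmentDist x y r z + segmentDist x y r' w + |r - r'| + 2 * δ := by
  have hsums : max (dist x z + dist y w) (dist x w + dist y z) ≤
      segmentDist x y r z + segmentDist x y r' w + |r - r'| + dist x y := by
    refine max_le ?_ ?_
    · linarith [dist_left_le_segmentDist_add x y r z, dist_right_le_segmentDist_add x y r' w,
        le_abs_self (r - r')]
    · linarith [dist_left_le_segmentDist_add x y r' w, dist_right_le_segmentDist_add x y r z,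
        neg_abs_le (r - r')]
  linarith [hX.four_point x y z w]

theorem GromovHyperbolicWith.segmentDist_add_dist_le (hX : GromovHyperbolicWith δ X) (x y : X)
    (r : ℝ) (z w v : X) :
    segmentDist x y r w + dist z v ≤
      max (segmentDist x y r z + dist w v) (segmentDist x y r v + dist w z) + 2 * δ := by
  have hfrom {q : X} {t : ℝ} (hq : ∀ a, dist q a - t ≤ segmentDist x y r a) :
      dist q w - t + dist z v ≤
        max (segmentDist x y r z + dist w v) (segmentDist x y r v + dist w z) + 2 * δ := by
    have hmax : max (dist q z + dist w v) (dist q v + dist w z) - t ≤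
        max (segmentDist x y r z + dist w v) (segmentDist x y r v + dist w z) := by
      rw [← max_sub_sub_right]
      exact max_le_max (by linarith [hq z]) (by linarith [hq v])
    linarith [hX.four_point q w z v]
  rw [segmentDist, max_add]
  exact max_le (hfrom fun a => le_max_left _ _) (hfrom fun a => le_max_right _ _)

theorem GromovHyperbolicWith.min_segmentProd_sub_le (hX : GromovHyperbolicWith δ X) (x y : X)
    (r : ℝ) (z w v : X) :
    min (segmentProd x y r z w) (segmentProd x y r w v) - δ ≤ segmentProd x y r z v := by
  have h := hX.segmentDist_add_dist_le x y r z w v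
  rw [sub_le_iff_le_add, min_le_iff]
  unfold segmentProd
  rw [dist_comm z w]
  rcases le_max_iff.1 (sub_le_iff_le_add.2 h) with h | h
  · right; linarith
  · left; linarith

theorem GromovHyperbolicWith.segmentProd_le_of_opposite (hX : GromovHyperbolicWith δ X) {x y : X}
    {r c : ℝ} {z w : X} (hδ : 0 ≤ δ) (hc : δ < 2 * c)
    (hz : c < segmentDist x y r z) (hxz : dist x z - r ≤ -c)
    (hw : c < segmentDist x y r w) (hyw : dist y w - (dist x y - r) ≤ -c) :
    segmentProd x y r z w ≤ δ := by
  have hz_eq : segmentDist x y r z = dist y z - (dist x y - r) :=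
    (max_choice _ _).resolve_left fun h => by rw [segmentDist, h] at hz; linarith
  have hw_eq : segmentDist x y r w = dist x w - r :=
    (max_choice _ _).resolve_right fun h => by rw [segmentDist, h] at hw; linarith
  have h := hX.four_point x w z y
  rw [dist_comm z y, dist_comm w y, dist_comm w z] at h
  unfold segmentProd
  rcases le_max_iff.1 (sub_le_iff_le_add.2 h) with h | h <;> linarith

theorem CoversSegment.mono {E : Set X} {x y : X} {D R : ℝ} (h : CoversSegment E x y D)
    (hDR : D ≤ R) : CoversSegment E x y R := fun r hr =>
  let ⟨z, hz, hzD⟩ := h r hr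
  ⟨z, hz, hzD.trans hDR⟩

theorem CoversSegment.symm {E : Set X} {x y : X} {D : ℝ} (h : CoversSegment E x y D) :
    CoversSegment E y x D := by
  intro r hr
  rw [dist_comm y x] at hr
  obtain ⟨z, hz, hzD⟩ := h (dist x y - r) ⟨by linarith [hr.2], by linarith [hr.1]⟩
  refine ⟨z, hz, ?_⟩
  rwa [← segmentDist_symm, dist_comm y x]

theorem CoversSegment.exists_mem_left {E : Set X} {x y : X} {D r : ℝ} (h : CoversSegment E x y D)
    (hx : x ∈ E) (hD : 0 ≤ D) (hr : r ∈ Icc 0 (dist x y))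
    (hfar : D - 1 < segmentDist x y r x) :
    ∃ z ∈ E, segmentDist x y r z ≤ 3 * D ∧ dist x z - r ≤ -(D - 1) := by
  rcases le_or_gt r (2 * D) with hrD | hrD
  · have hx_eq : segmentDist x y r x = r := by rw [segmentDist_left, abs_of_nonneg hr.1]
    rw [hx_eq] at hfar
    exact ⟨x, hx, by linarith, by rw [dist_self]; linarith⟩
  · obtain ⟨z, hz, hzD⟩ := h (r - 2 * D) ⟨by linarith, by linarith [hr.2]⟩
    have hxz := dist_left_le_segmentDist_add x y (r - 2 * D) z
    have hyz := dist_right_le_segmentDist_add x y (r - 2 * D) z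
    exact ⟨z, hz, max_le (by linarith) (by linarith), by linarith⟩

theorem CoversSegment.exists_mem_right {E : Set X} {x y : X} {D r : ℝ} (h : CoversSegment E x y D)
    (hy : y ∈ E) (hD : 0 ≤ D) (hr : r ∈ Icc 0 (dist x y))
    (hfar : D - 1 < segmentDist x y r y) :
    ∃ z ∈ E, segmentDist x y r z ≤ 3 * D ∧ dist y z - (dist x y - r) ≤ -(D - 1) := by
  simp only [← segmentDist_symm x y r] at hfar ⊢
  refine h.symm.exists_mem_left hy hD ?_ hfar
  rw [dist_comm y x]
  exact ⟨by linarith [hr.2], by linarith [hr.1]⟩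

theorem exists_coversSegment_not_coversSegment_sub_one {E : Set X} {x y : X} (hx : x ∈ E) :
    ∃ D, 0 ≤ D ∧ CoversSegment E x y D ∧ ¬ CoversSegment E x y (D - 1) := by
  have hnonneg (D : ℝ) (hD : CoversSegment E x y D) : 0 ≤ D := by
    obtain ⟨z, -, hz⟩ := hD 0 ⟨le_rfl, dist_nonneg⟩
    exact (segmentDist_nonneg x y 0 z).trans hz
  have hdist : CoversSegment E x y (dist x y) := fun r hr =>
    ⟨x, hx, by rw [segmentDist_left, abs_of_nonneg hr.1]; exact hr.2⟩
  obtain ⟨D, hD, hD_lt⟩ := exists_lt_of_csInf_lt (s := {D | CoversSegment E x y D}) ⟨_, hdist⟩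
    (lt_add_one _)
  exact ⟨D, hnonneg D hD, hD, notMem_of_lt_csInf (sub_lt_iff_lt_add.2 hD_lt) ⟨0, hnonneg⟩⟩

end VirtualPoints

section SmallExponentialDistortion

variable {Y X : Type*} [PseudoMetricSpace Y] [PseudoMetricSpace X] {f : Y → X} {C δ ε B : ℝ}

theorem CoarseLipschitzWith.sub_le_segmentProd (hf : CoarseLipschitzWith C f) (hC : 0 ≤ C)
    {x y : X} {r c : ℝ} (hfar : ∀ a, c < segmentDist x y r (f a)) {a b : Y}
    (hab : dist a b ≤ 1) : c - C ≤ segmentProd x y r (f a) (f b) := by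
  have hstep : C * dist a b ≤ C := mul_le_of_le_one_right hC hab
  unfold segmentProd
  linarith [hf a b, hfar a, hfar b]

theorem GromovHyperbolicWith.le_of_coversSegment_range_of_not (hX : GromovHyperbolicWith δ X)
    (hδ : 0 ≤ δ) (hY : HasMidpoints Y) (hC : 0 ≤ C) (hf : CoarseLipschitzWith C f)
    (hε : 0 ≤ ε) (hB : 0 ≤ B) (hεδ : 24 * (ε * δ) ≤ 1)
    (hexp : ∀ a b, dist a b ≤ Real.exp (ε * dist (f a) (f b) + B)) {x y : Y} {D : ℝ} (hD : 0 ≤ D)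
    (hcov : CoversSegment (range f) (f x) (f y) D)
    (hncov : ¬ CoversSegment (range f) (f x) (f y) (D - 1)) :
    D ≤ 2 + 2 * C + 5 * δ + 4 * B * δ := by
  have hBδ : 0 ≤ B * δ := mul_nonneg hB hδ
  by_contra! hlarge
  unfold CoversSegment at hncov
  push Not at hncov
  obtain ⟨r, hr, hfar⟩ := hncov
  obtain ⟨_, ⟨a, rfl⟩, haD, ha⟩ := hcov.exists_mem_left (mem_range_self x) hD hr
    (hfar _ (mem_range_self x))
  obtain ⟨_, ⟨b, rfl⟩, hbD, hb⟩ := hcov.exists_mem_right (mem_range_self y) hD hr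
    (hfar _ (mem_range_self y))
  rw [forall_mem_range] at hfar
  have hupper : segmentProd (f x) (f y) r (f a) (f b) ≤ δ :=
    hX.segmentProd_le_of_opposite hδ (by linarith) (hfar a) ha (hfar b) hb
  have hdist_f : dist (f a) (f b) ≤ 6 * D + 2 * δ := by
    have := hX.dist_le_segmentDist_add (f x) (f y) r r (f a) (f b)
    rw [sub_self, abs_zero] at this
    linarith
  have hdist : dist a b ≤ Real.exp (ε * (6 * D + 2 * δ) + B) :=
    (hexp a b).trans (Real.exp_le_exp.2 (by gcongr))
  have hlower : D - 1 - C - (2 * (ε * (6 * D + 2 * δ) + B) + 1) * δ ≤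
      segmentProd (f x) (f y) r (f a) (f b) :=
    hY.sub_le_of_dist_le_exp (P := fun a b => segmentProd (f x) (f y) r (f a) (f b)) hδ
      (fun _ _ _ => hX.min_segmentProd_sub_le _ _ _ _ _ _)
      (fun _ _ => hf.sub_le_segmentProd hC hfar) (by positivity) hdist
  have habsorb : 24 * (ε * δ) * (6 * D + 2 * δ) ≤ 6 * D + 2 * δ :=
    mul_le_of_le_one_left (by positivity) hεδ
  linarith

theorem GromovHyperbolicWith.coversSegment_range (hX : GromovHyperbolicWith δ X)
    (hδ : 0 ≤ δ) (hY : HasMidpoints Y) (hC : 0 ≤ C) (hf : CoarseLipschitzWith C f)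
    (hε : 0 ≤ ε) (hB : 0 ≤ B) (hεδ : 24 * (ε * δ) ≤ 1)
    (hexp : ∀ a b, dist a b ≤ Real.exp (ε * dist (f a) (f b) + B)) (x y : Y) :
    CoversSegment (range f) (f x) (f y) (2 + 2 * C + 5 * δ + 4 * B * δ) := by
  obtain ⟨D, hD, hcov, hncov⟩ :=
    exists_coversSegment_not_coversSegment_sub_one (y := f y) (mem_range_self (f := f) x)
  exact hcov.mono
    (hX.le_of_coversSegment_range_of_not hδ hY hC hf hε hB hεδ hexp hD hcov hncov)

theorem GromovHyperbolicWith.dist_le_of_coversSegment_range (hX : GromovHyperbolicWith δ X)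
    (hε : 0 ≤ ε) (hexp : ∀ a b, dist a b ≤ Real.exp (ε * dist (f a) (f b) + B)) {x y : Y}
    {R : ℝ} (hR : 0 ≤ R) (hcov : CoversSegment (range f) (f x) (f y) R) :
    dist x y ≤ Real.exp (ε * (2 * R + 2 * δ + 1) + B) * (dist (f x) (f y) + 3) := by
  set l := dist (f x) (f y)
  set K := Real.exp (ε * (2 * R + 2 * δ + 1) + B)
  have hl : 0 ≤ l := dist_nonneg
  have hpull {r r' : ℝ} {a b : Y} (hrr' : |r - r'| ≤ 1)
      (ha : segmentDist (f x) (f y) r (f a) ≤ R) (hb : segmentDist (f x) (f y) r' (f b) ≤ R) :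
      dist a b ≤ K := by
    have hdist_f := hX.dist_le_segmentDist_add (f x) (f y) r r' (f a) (f b)
    refine (hexp a b).trans (Real.exp_le_exp.2 ?_)
    gcongr
    linarith
  have hcov' : ∀ r, ∃ a, r ∈ Icc 0 l → segmentDist (f x) (f y) r (f a) ≤ R := fun r => by
    by_cases hr : r ∈ Icc 0 l
    · obtain ⟨_, ⟨a, rfl⟩, ha⟩ := hcov r hr
      exact ⟨a, fun _ => ha⟩
    · exact ⟨x, fun h => absurd h hr⟩
  choose u hu using hcov'
  have hstart : dist x (u 0) ≤ K :=
    hpull (r := 0) (by simp) (by simpa [segmentDist_left] using hR) (hu 0 ⟨le_rfl, hl⟩)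
  have hend : dist (u l) y ≤ K :=
    hpull (r' := l) (by simp) (hu l ⟨hl, le_rfl⟩) (by simpa [segmentDist_right, l] using hR)
  have hwalk : dist (u 0) (u l) ≤ (l + 1) * K :=
    dist_le_of_unit_steps (Real.exp_pos _).le hl
      fun r hr r' hr' hrr' => hpull hrr' (hu r hr) (hu r' hr')
  linarith [dist_triangle4 x (u 0) (u l) y]

theorem QIEmbeddingWith.of_dist_le {K c : ℝ} (hf : CoarseLipschitzWith C f) (hC : 0 ≤ C)
    (hK : 1 ≤ K) (hc : 0 ≤ c) (h : ∀ x y, dist x y ≤ K * (dist (f x) (f y) + c)) :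
    QIEmbeddingWith (K + C) (c + C) f := by
  intro x y
  constructor
  · have hle : dist x y ≤ (dist (f x) (f y) + c) * (K + C) := by
      have : 0 ≤ (dist (f x) (f y) + c) * C := by positivity
      linarith [h x y]
    linarith [(div_le_iff₀ (by linarith)).2 hle]
  · have : 0 ≤ K * dist x y := by positivity
    linarith [hf x y]


end SmallExponentialDistortion

theorem subexponentiallyDistorted_into_hyperbolic_is_QIEmbedding_general
    (C : ℝ) (τ : ℝ → ℝ) (δ : ℝ) (hC : 0 ≤ C) (hδ : 0 ≤ δ)
    (hτ : Filter.Tendsto (fun t => τ t / Real.log t) Filter.atTop Filter.atTop) :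
    ∃ Λ μ : ℝ, 1 ≤ Λ ∧ 0 ≤ μ ∧
      ∀ (Y : Type u) (Y' : Type v) [PseudoMetricSpace Y] [PseudoMetricSpace Y'] (f : Y → Y'),
        HasMidpoints Y →
        GromovHyperbolicWith δ Y' →
        CoarseLipschitzWith C f →
        (∀ x y : Y, τ (dist x y) ≤ dist (f x) (f y)) →
        QIEmbeddingWith Λ μ f := by
  set ε := 1 / (24 * δ + 1)
  have hε : 0 < ε := by positivity
  have hεδ : 24 * (ε * δ) ≤ 1 := by
    have : ε * (24 * δ + 1) = 1 := one_div_mul_cancel (by positivity)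
    linarith
  obtain ⟨B, hB, hexp⟩ := exists_le_exp_of_tendsto_div_log hτ hε
  set R := 2 + 2 * C + 5 * δ + 4 * B * δ
  set K := Real.exp (ε * (2 * R + 2 * δ + 1) + B)
  have hK : 1 ≤ K := Real.one_le_exp (by positivity)
  refine ⟨K + C, 3 + C, by linarith, by linarith, fun Y Y' _ _ f hY hY' hf hlow => ?_⟩
  have hdist_exp (a b : Y) : dist a b ≤ Real.exp (ε * dist (f a) (f b) + B) :=
    hexp _ _ dist_nonneg (hlow a b)
  exact .of_dist_le hf hC hK (by norm_num) fun x y =>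
    hY'.dist_le_of_coversSegment_range hε.le hdist_exp (by positivity)
      (hY'.coversSegment_range hδ hY hC hf hε.le hB hεδ hdist_exp x y)

/-- **Proposition 4.5.** A subexponentially distorted map from a geodesic
metric space to a Gromov hyperbolic geodesic metric space is a quasi-isometric
embedding, with constants depending only on the distortion data `(C, τ)` of
`f` and on the hyperbolicity constant `δ`. -/
theorem subexponentiallyDistorted_into_hyperbolic_is_QIEmbedding
    (C : ℝ) (τ : ℝ → ℝ) (δ : ℝ) (hC : 0 < C) (hδ : 0 ≤ δ)
    (hτ : Filter.Tendsto (fun t => τ t / Real.log t) Filter.atTop Filter.atTop) :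
    ∃ Λ μ : ℝ, 1 ≤ Λ ∧ 0 ≤ μ ∧
      ∀ (Y : Type u) (Y' : Type v) [MetricSpace Y] [MetricSpace Y']
        [GeodesicSpace Y] [GeodesicSpace Y'] (f : Y → Y'),
        GromovHyperbolicWith δ Y' →
        CoarseLipschitzWith C f →
        (∀ x y : Y, τ (dist x y) ≤ dist (f x) (f y)) →
        QIEmbeddingWith Λ μ f := by
  obtain ⟨Λ, μ, hΛ, hμ, h⟩ :=
    subexponentiallyDistorted_into_hyperbolic_is_QIEmbedding_general.{u, v} C τ δ hC.le hδ hτ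
  exact ⟨Λ, μ, hΛ, hμ, fun Y Y' _ _ _ _ f => h Y Y' f GeodesicSpace.hasMidpoints⟩

end RelHypPaper
end
end

section
/- Let (Y,𝒫) be a relatively hyperbolic space with transient-set constants μ,R fixed as in the structure theory. For every L there exists a constant K with the following property: if γ is a geodesic in Y and α:[a,b]→Y is a coarsely L-Lipschitz path with the same endpoints as γ, then every transient point p∈trans_{μ,R}(γ) satisfies d(p,α([a,b])) ≤ K·log(|b−a|+1)+K. -/
noncomputable section

open Metric Set Filter

namespace RelHypPaper

/-! ## Deep and transient points of geodesics -/

/-- The parameter `s` of the geodesic `γ : [a,b] → X` is a deep point (with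
constants `μ, R`): it lies on a subgeodesic `γ|[u,v]` with endpoints in the
`μ`-neighbourhood of some peripheral set `P i`, at distance more than `R`
from both endpoints. -/
def DeepParam {X : Type*} [MetricSpace X] {ι : Type*} (P : ι → Set X)
    (μ R : ℝ) (γ : ℝ → X) (a b s : ℝ) : Prop :=
  ∃ u v : ℝ, a ≤ u ∧ u ≤ s ∧ s ≤ v ∧ v ≤ b ∧ R < s - u ∧ R < v - s ∧
    ∃ i : ι, γ u ∈ Metric.cthickening μ (P i) ∧ γ v ∈ Metric.cthickening μ (P i)

/-- The parameter `s` of the geodesic `γ : [a,b] → X` is a transient point. -/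
def TransientParam {X : Type*} [MetricSpace X] {ι : Type*} (P : ι → Set X)
    (μ R : ℝ) (γ : ℝ → X) (a b s : ℝ) : Prop :=
  s ∈ Set.Icc a b ∧ ¬ DeepParam P μ R γ a b s

/-- The relative Rips condition with constants `μ, R, D`: transient points of
one side of a geodesic triangle are `D`-close to transient points of the other
two sides. -/
def RelRips {X : Type*} [MetricSpace X] {ι : Type*} (P : ι → Set X)
    (μ R D : ℝ) : Prop :=
  ∀ x y z : X, ∀ γ γ₁ γ₂ : ℝ → X,
    IsGeodesicFrom γ x y → IsGeodesicFrom γ₁ x z → IsGeodesicFrom γ₂ z y →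
    ∀ s : ℝ, TransientParam P μ R γ 0 (dist x y) s →
      (∃ t : ℝ, TransientParam P μ R γ₁ 0 (dist x z) t ∧ dist (γ s) (γ₁ t) ≤ D) ∨
      (∃ t : ℝ, TransientParam P μ R γ₂ 0 (dist z y) t ∧ dist (γ s) (γ₂ t) ≤ D)

end RelHypPaper

namespace RelHypPaper

universe u w

/-! The path is cut in half repeatedly. The relative Rips condition, applied to the triangle
spanned by the endpoints of the current piece of the path and the image of its midpoint, replaces a
transient point of the geodesic between the endpoints by a transient point of a geodesic over one
of the halves, at the cost of moving it by at most `D`. After about `log₂ (b - a)` steps the piece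
has length at most one, and the geodesic over it is short because the path is coarsely Lipschitz. -/

theorem IsGeodesicFrom.dist_apply_left {X : Type*} [PseudoMetricSpace X] {γ : ℝ → X} {x y : X}
    (hγ : IsGeodesicFrom γ x y) {s : ℝ} (hs : s ∈ Icc 0 (dist x y)) : dist (γ s) x = s := by
  have h := hγ.2.2 s hs 0 ⟨le_rfl, dist_nonneg⟩
  rwa [hγ.1, sub_zero, abs_of_nonneg hs.1] at h

theorem exists_nat_le_two_pow_and_le_logb {T : ℝ} (hT : 0 ≤ T) :
    ∃ n : ℕ, T ≤ 2 ^ n ∧ (n : ℝ) ≤ Real.logb 2 (T + 1) + 1 := by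
  have hlogb : 0 ≤ Real.logb 2 (T + 1) := Real.logb_nonneg one_lt_two (by linarith)
  refine ⟨⌈Real.logb 2 (T + 1)⌉₊, ?_, (Nat.ceil_lt_add_one hlogb).le⟩
  have hpow : T + 1 ≤ 2 ^ (⌈Real.logb 2 (T + 1)⌉₊ : ℝ) :=
    (Real.logb_le_iff_le_rpow one_lt_two (by linarith)).1 (Nat.le_ceil _)
  rw [Real.rpow_natCast] at hpow
  linarith

theorem logb_two_le_two_mul_log {x : ℝ} (hx : 1 ≤ x) : Real.logb 2 x ≤ 2 * Real.log x := by
  rw [Real.logb, div_le_iff₀ (Real.log_pos one_lt_two)]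
  nlinarith [Real.log_nonneg hx, Real.log_two_gt_d9]

namespace RelRips

variable {X : Type*} [MetricSpace X] [GeodesicSpace X] {ι : Type*} {P : ι → Set X} {μ R D C : ℝ}

theorem exists_dist_le_mul_add_of_sub_le_two_pow (hRips : RelRips P μ R D) (n : ℕ)
    {γ α : ℝ → X} {a b : ℝ} (hab : a ≤ b) (hn : b - a ≤ 2 ^ n) (hγ : IsGeodesicFrom γ (α a) (α b))
    (hα : ∀ s ∈ Icc a b, ∀ t ∈ Icc a b, |s - t| ≤ 1 → dist (α s) (α t) ≤ C)
    {s : ℝ} (hs : TransientParam P μ R γ 0 (dist (α a) (α b)) s) :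
    ∃ t ∈ Icc a b, dist (γ s) (α t) ≤ D * n + C := by
  induction n generalizing γ a b s with
  | zero =>
    have hshort : |a - b| ≤ 1 := by
      rwa [abs_sub_comm, abs_of_nonneg (sub_nonneg.2 hab), ← pow_zero (2 : ℝ)]
    refine ⟨a, left_mem_Icc.2 hab, ?_⟩
    calc dist (γ s) (α a) = s := hγ.dist_apply_left hs.1
      _ ≤ dist (α a) (α b) := hs.1.2
      _ ≤ C := hα a (left_mem_Icc.2 hab) b (right_mem_Icc.2 hab) hshort
      _ = D * (0 : ℕ) + C := by simp
  | succ n ih =>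
    set m := (a + b) / 2 with hm
    rw [pow_succ] at hn
    have ham : a ≤ m := by linarith
    have hmb : m ≤ b := by linarith
    have hleft : Icc a m ⊆ Icc a b := Icc_subset_Icc_right hmb
    have hright : Icc m b ⊆ Icc a b := Icc_subset_Icc_left ham
    obtain ⟨γ₁, hγ₁⟩ := GeodesicSpace.exists_geod (α a) (α m)
    obtain ⟨γ₂, hγ₂⟩ := GeodesicSpace.exists_geod (α m) (α b)
    push_cast
    rcases hRips _ _ _ γ γ₁ γ₂ hγ hγ₁ hγ₂ s hs with ⟨r, hr, hsr⟩ | ⟨r, hr, hsr⟩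
    · obtain ⟨t, ht, hrt⟩ := ih ham (by linarith) hγ₁
        (fun u hu v hv => hα u (hleft hu) v (hleft hv)) hr
      exact ⟨t, hleft ht, by linarith [dist_triangle (γ s) (γ₁ r) (α t)]⟩
    · obtain ⟨t, ht, hrt⟩ := ih hmb (by linarith) hγ₂
        (fun u hu v hv => hα u (hright hu) v (hright hv)) hr
      exact ⟨t, hright ht, by linarith [dist_triangle (γ s) (γ₂ r) (α t)]⟩

theorem exists_dist_le_mul_logb_add (hRips : RelRips P μ R D) (hD : 0 ≤ D) {γ α : ℝ → X} {a b : ℝ}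
    (hab : a ≤ b) (hγ : IsGeodesicFrom γ (α a) (α b))
    (hα : ∀ s ∈ Icc a b, ∀ t ∈ Icc a b, |s - t| ≤ 1 → dist (α s) (α t) ≤ C)
    {s : ℝ} (hs : TransientParam P μ R γ 0 (dist (α a) (α b)) s) :
    ∃ t ∈ Icc a b, dist (γ s) (α t) ≤ D * (Real.logb 2 (b - a + 1) + 1) + C := by
  obtain ⟨n, hpow, hlogb⟩ := exists_nat_le_two_pow_and_le_logb (sub_nonneg.2 hab)
  obtain ⟨t, ht, hst⟩ :=
    hRips.exists_dist_le_mul_add_of_sub_le_two_pow n hab hpow hγ hα hs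
  exact ⟨t, ht, hst.trans (by gcongr)⟩

end RelRips

theorem transient_close_to_coarse_lipschitz_paths_general
    {X : Type*} [MetricSpace X] [GeodesicSpace X] {ι : Type*} {P : ι → Set X} {μ R D : ℝ}
    (hD : 0 ≤ D) (hRips : RelRips P μ R D) :
    ∀ L : ℝ, 0 < L → ∃ K : ℝ, 0 < K ∧
      ∀ (x y : X) (γ : ℝ → X), IsGeodesicFrom γ x y →
      ∀ (α : ℝ → X) (a b : ℝ), a ≤ b → α a = x → α b = y →
        (∀ s ∈ Icc a b, ∀ t ∈ Icc a b, dist (α s) (α t) ≤ L * |s - t| + L) →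
        ∀ s : ℝ, TransientParam P μ R γ 0 (dist x y) s →
          ∃ t ∈ Icc a b, dist (γ s) (α t) ≤ K * Real.log (|b - a| + 1) + K := by
  intro L hL
  refine ⟨2 * D + 2 * L, by positivity, ?_⟩
  rintro _ _ γ hγ α a b hab rfl rfl hα s hs
  have hunit : ∀ u ∈ Icc a b, ∀ v ∈ Icc a b, |u - v| ≤ 1 → dist (α u) (α v) ≤ 2 * L :=
    fun u hu v hv huv => (hα u hu v hv).trans (by nlinarith)
  obtain ⟨t, ht, hst⟩ := hRips.exists_dist_le_mul_logb_add hD hab hγ hunit hs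
  refine ⟨t, ht, hst.trans ?_⟩
  rw [abs_of_nonneg (sub_nonneg.2 hab)]
  have hone : 1 ≤ b - a + 1 := by linarith
  have hlog : 0 ≤ Real.log (b - a + 1) := Real.log_nonneg hone
  calc D * (Real.logb 2 (b - a + 1) + 1) + 2 * L
      ≤ D * (2 * Real.log (b - a + 1) + 1) + 2 * L := by gcongr; exact logb_two_le_two_mul_log hone
    _ ≤ (2 * D + 2 * L) * Real.log (b - a + 1) + (2 * D + 2 * L) := by
      linarith [mul_nonneg hL.le hlog]

/-- **Lemma 4.6.** In a relatively hyperbolic space `(X, P)` with transient-set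
constants `μ, R` satisfying the relative Rips condition, for every `L` there is
`K` such that any transient point of a geodesic `γ` is within distance
`K·log(|b-a|+1) + K` of any coarsely `L`-Lipschitz path `α : [a,b] → X` with
the same endpoints as `γ`. -/
theorem transient_close_to_coarse_lipschitz_paths
    {X : Type u} [MetricSpace X] {ι : Type w} {P : ι → Set X}
    (RH : RelHypSpace X P) (μ R D : ℝ) (hμ : 0 ≤ μ) (hR : 0 ≤ R) (hD : 0 ≤ D)
    (hRips : RelRips P μ R D) :
    ∀ L : ℝ, 0 < L → ∃ K : ℝ, 0 < K ∧
      ∀ (x y : X) (γ : ℝ → X), IsGeodesicFrom γ x y →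
      ∀ (α : ℝ → X) (a b : ℝ), a ≤ b → α a = x → α b = y →
        (∀ s ∈ Set.Icc a b, ∀ t ∈ Set.Icc a b, dist (α s) (α t) ≤ L * |s - t| + L) →
        ∀ s : ℝ, TransientParam P μ R γ 0 (dist x y) s →
          ∃ t ∈ Set.Icc a b, dist (γ s) (α t) ≤ K * Real.log (|b - a| + 1) + K :=
  haveI := RH.geodX
  transient_close_to_coarse_lipschitz_paths_general hD hRips

end RelHypPaper
end
end

section
/- Let (Y,𝒫) be a relatively hyperbolic space with transient-set constants fixed as in the structure theory. Let γ be a geodesic in Y and let α be the image of a subexponentially distorted coarsely Lipschitz map [0,T]→Y with the same endpoints as γ. Then every transient point p of γ satisfies d(p,α) ≤ E, where E is a constant depending only on the distortion data of the map and on (Y,𝒫), and not on γ, α or T. -/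
noncomputable section

open Metric Set Filter

namespace RelHypPaper

universe u w

/-!
Measure how far a transient point attached to the endpoints of a subpath can be from that subpath.

Halving the parameter interval `k` times and applying the thin triangle property at each midpoint
shows that this distance is at most `D * k + l` when the interval has length at most `2 ^ k`. Since
the distortion is subexponential, `k` is sublinear in the distance between the endpoints of the
subpath, so the distance to the subpath is at most `d / 8 + K`, with `d` the distance between its
endpoints.

Now suppose that a transient point `p` is at distance at least a large `M` from its subpath, and cut
the subpath at roughly the first and the last parameters where it is `2 * M`-close to `p`. The
thin triangle property moves `p` to one of the three pieces. The middle one has endpoints at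
distance about `4 * M`, so it comes within about `M / 2` of `p`, which is absurd. The outer ones are at distance
about `2 * M` from `p`, so `M` can always be increased by `1`, contradicting the boundedness of the
path.
-/

/-- A ternary relation, read as "`p` is a point of a side from `x` to `y`", whose triangles are
`D`-thin. It abstracts the relation "`p` is a transient point of a geodesic from `x` to `y`"; of the
sides being geodesics, only the bound `dist_le` is retained. -/
structure ThinTriangles {X : Type*} [PseudoMetricSpace X] (D : ℝ) (Tr : X → X → X → Prop) :
    Prop where
  dist_le : ∀ {x y p}, Tr x y p → dist x p ≤ dist x y
  thin : ∀ {x y p}, Tr x y p → ∀ z,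
    (∃ q, Tr x z q ∧ dist p q ≤ D) ∨ (∃ q, Tr z y q ∧ dist p q ≤ D)

/-- The map `α` moves points of `I` at distance at most `1` to points at distance at most `l`;
this is the local part of being coarsely Lipschitz on `I`. -/
def BoundedStepsOn {X : Type*} [PseudoMetricSpace X] (α : ℝ → X) (l : ℝ) (I : Set ℝ) : Prop :=
  ∀ s ∈ I, ∀ t ∈ I, |s - t| ≤ 1 → dist (α s) (α t) ≤ l

/-- `M` is an escape distance of the path `α` on `I`: some subpath over `I` stays at distance at
least `M` from a point which `Tr` attaches to the endpoints of that subpath. -/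
def IsEscapeDist {X : Type*} [PseudoMetricSpace X] (Tr : X → X → X → Prop) (α : ℝ → X)
    (I : Set ℝ) (M : ℝ) : Prop :=
  ∃ a ∈ I, ∃ b ∈ I, a ≤ b ∧ ∃ p, Tr (α a) (α b) p ∧ ∀ t ∈ Icc a b, M ≤ dist p (α t)

/-- `p` is a transient point of some geodesic from `x` to `y`. -/
def IsTransientPoint {X : Type*} [MetricSpace X] {ι : Type*} (P : ι → Set X) (μ R : ℝ)
    (x y p : X) : Prop :=
  ∃ γ : ℝ → X, IsGeodesicFrom γ x y ∧ ∃ s, TransientParam P μ R γ 0 (dist x y) s ∧ γ s = p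

section CoarselyLipschitzPaths

variable {X : Type*} [PseudoMetricSpace X] {α : ℝ → X} {L l : ℝ} {I J : Set ℝ}

lemma BoundedStepsOn.mono (h : BoundedStepsOn α l J) (hIJ : I ⊆ J) : BoundedStepsOn α l I :=
  fun s hs t ht => h s (hIJ hs) t (hIJ ht)

lemma BoundedStepsOn.dist_left (h : BoundedStepsOn α l I) (p : X) :
    BoundedStepsOn (fun t => dist p (α t)) l I :=
  fun s hs t ht hst => (dist_dist_dist_le_right p (α s) (α t)).trans (h s hs t ht hst)

lemma boundedStepsOn_of_dist_le (hL : 0 ≤ L)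
    (h : ∀ s ∈ I, ∀ t ∈ I, dist (α s) (α t) ≤ L * |s - t| + L) :
    BoundedStepsOn α (2 * L) I := by
  intro s hs t ht hst
  linarith [h s hs t ht, mul_le_of_le_one_right hL hst]

lemma isBounded_image_of_dist_le (hL : 0 ≤ L) (hI : Bornology.IsBounded I)
    (h : ∀ s ∈ I, ∀ t ∈ I, dist (α s) (α t) ≤ L * |s - t| + L) :
    Bornology.IsBounded (α '' I) := by
  obtain ⟨C, hC⟩ := isBounded_iff.1 hI
  refine isBounded_iff.2 ⟨L * C + L, ?_⟩
  rintro _ ⟨s, hs, rfl⟩ _ ⟨t, ht, rfl⟩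
  exact (h s hs t ht).trans (by gcongr; exact hC hs ht)

end CoarselyLipschitzPaths

section FirstAndLast

variable {f : ℝ → ℝ} {l a b r : ℝ}

lemma BoundedStepsOn.exists_first_le (h : BoundedStepsOn f l (Icc a b))
    (hr : ∃ t ∈ Icc a b, f t ≤ r) :
    ∃ m ∈ Icc a b, f m ≤ r + l ∧ (a = m ∨ ∀ t ∈ Icc a m, r - l ≤ f t) := by
  let F : Set ℝ := {t ∈ Icc a b | f t ≤ r}
  have hF : F.Nonempty := hr
  have hbdd : BddBelow F := ⟨a, fun t ht => ht.1.1⟩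
  obtain ⟨t, ⟨htab, htr⟩, htm⟩ := exists_lt_of_csInf_lt hF (lt_add_one (sInf F))
  have hmt : sInf F ≤ t := csInf_le hbdd ⟨htab, htr⟩
  have ham : a ≤ sInf F := le_csInf hF fun t ht => ht.1.1
  have hmab : sInf F ∈ Icc a b := ⟨ham, hmt.trans htab.2⟩
  have hstep : ∀ u ∈ Icc a b, ∀ v ∈ Icc a b, |u - v| ≤ 1 → f u ≤ f v + l := fun u hu v hv huv => by
    linarith [le_abs_self (f u - f v), h u hu v hv huv, Real.dist_eq (f u) (f v)]
  refine ⟨sInf F, hmab, ?_, ham.eq_or_lt.imp_right fun ham s hs => ?_⟩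
  · linarith [hstep _ hmab t htab (abs_le.2 ⟨by linarith, by linarith⟩)]
  -- Step back from `s` to a parameter strictly before the infimum, which covers `s = sInf F`.
  have hu : max a (s - 1) ∈ Icc a b :=
    ⟨le_max_left _ _, max_le (htab.1.trans htab.2) (by linarith [hs.2, hmab.2])⟩
  have hum : max a (s - 1) < sInf F := max_lt ham (by linarith [hs.2])
  have hru : r < f (max a (s - 1)) := not_le.1 fun hfu => notMem_of_lt_csInf hum hbdd ⟨hu, hfu⟩
  have hus : |max a (s - 1) - s| ≤ 1 :=
    abs_le.2 ⟨by linarith [le_max_right a (s - 1)], by linarith [max_le hs.1 (sub_one_lt s).le]⟩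
  linarith [hstep _ hu s ⟨hs.1, hs.2.trans hmab.2⟩ hus]

lemma BoundedStepsOn.comp_neg (h : BoundedStepsOn f l (Icc a b)) :
    BoundedStepsOn (fun t => f (-t)) l (Icc (-b) (-a)) := by
  intro s hs t ht hst
  refine h _ (neg_mem_Icc_iff.2 hs) _ (neg_mem_Icc_iff.2 ht) ?_
  rwa [neg_sub_neg, abs_sub_comm]

lemma BoundedStepsOn.exists_last_le (h : BoundedStepsOn f l (Icc a b))
    (hr : ∃ t ∈ Icc a b, f t ≤ r) :
    ∃ m ∈ Icc a b, f m ≤ r + l ∧ (m = b ∨ ∀ t ∈ Icc m b, r - l ≤ f t) := by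
  obtain ⟨t, ht, htr⟩ := hr
  obtain ⟨m, hm, hmr, hfar⟩ := h.comp_neg.exists_first_le (r := r)
    ⟨-t, by simpa [and_comm] using ht, by simpa using htr⟩
  refine ⟨-m, neg_mem_Icc_iff.2 hm, hmr, hfar.imp (fun hbm => ?_) fun hfar s hs => ?_⟩
  · rw [← hbm, neg_neg]
  · simpa using hfar (-s) ⟨neg_le_neg hs.2, neg_le.1 hs.1⟩

end FirstAndLast

lemma exists_two_pow_of_tendsto_div_log {τ : ℝ → ℝ}
    (hτ : Tendsto (fun t => τ t / Real.log t) atTop atTop) {A : ℝ} (hA : 0 ≤ A) :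
    ∃ K, 0 ≤ K ∧ ∀ t d, 0 ≤ d → τ t ≤ d → ∃ k : ℕ, t ≤ 2 ^ k ∧ A * k ≤ d + K := by
  obtain ⟨t₀, ht₀⟩ := eventually_atTop.1 (hτ.eventually_ge_atTop (A / Real.log 2))
  obtain ⟨n, hn⟩ := pow_unbounded_of_one_lt (max t₀ 1) one_lt_two
  refine ⟨A * n + A, by positivity, fun t d hd htd => ?_⟩
  rcases le_or_gt t (max t₀ 1) with hsmall | hlarge
  · exact ⟨n, hsmall.trans hn.le, by linarith⟩
  obtain ⟨htt₀, ht1⟩ := max_lt_iff.1 hlarge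
  have hlog : A * Real.logb 2 t ≤ τ t := by
    have := (le_div_iff₀ (Real.log_pos ht1)).1 (ht₀ t htt₀.le)
    rwa [div_mul_eq_mul_div, mul_div_assoc] at this
  refine ⟨⌈Real.logb 2 t⌉₊, ?_, ?_⟩
  · rw [← Real.rpow_natCast, ← Real.logb_le_iff_le_rpow one_lt_two (by linarith)]
    exact Nat.le_ceil _
  · have hceil := (Nat.ceil_lt_add_one (Real.logb_nonneg one_lt_two ht1.le)).le
    have hAn : 0 ≤ A * n := by positivity
    linarith [mul_le_mul_of_nonneg_left hceil hA]

lemma lt_of_forall_exists_add_one_le {S : Set ℝ} {M M₀ : ℝ} (hS : BddAbove S)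
    (hstep : ∀ M ∈ S, M₀ ≤ M → ∃ M', M + 1 ≤ M' ∧ M' ∈ S) (hM : M ∈ S) : M < M₀ := by
  by_contra! hM₀
  obtain ⟨N, ⟨hNS, hN⟩, hlt⟩ := exists_lt_of_lt_csSup (s := S ∩ Ici M₀) ⟨M, hM, hM₀⟩ (sub_one_lt _)
  obtain ⟨N', hNN', hN'S⟩ := hstep N hNS hN
  have hle : N' ≤ sSup (S ∩ Ici M₀) :=
    le_csSup (hS.mono inter_subset_left) ⟨hN'S, (mem_Ici.1 hN).trans (by linarith)⟩
  linarith

section ThinTriangles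

variable {X : Type*} [PseudoMetricSpace X] {Tr : X → X → X → Prop} {α : ℝ → X} {I : Set ℝ}
  {D K M a b l r δ : ℝ} {p q : X}

lemma ThinTriangles.nonneg {x y : X} (h : ThinTriangles D Tr) (hp : Tr x y p) : 0 ≤ D := by
  rcases h.thin hp p with ⟨_, _, hpq⟩ | ⟨_, _, hpq⟩ <;> exact dist_nonneg.trans hpq

lemma ThinTriangles.thin_quadrilateral {x y : X} (h : ThinTriangles D Tr) (hp : Tr x y p)
    (z w : X) :
    (∃ q, Tr x z q ∧ dist p q ≤ D) ∨ (∃ q, Tr z w q ∧ dist p q ≤ 2 * D) ∨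
      ∃ q, Tr w y q ∧ dist p q ≤ 2 * D := by
  refine (h.thin hp z).imp_right fun ⟨q, hq, hpq⟩ => ?_
  refine (h.thin hq w).imp (fun ⟨q', hq', hqq'⟩ => ⟨q', hq', ?_⟩)
    (fun ⟨q', hq', hqq'⟩ => ⟨q', hq', ?_⟩) <;>
  linarith [dist_triangle p q q']

lemma ThinTriangles.exists_dist_le_mul_add (h : ThinTriangles D Tr) {k : ℕ} (hab : a ≤ b)
    (hk : b - a ≤ 2 ^ k) (hα : BoundedStepsOn α l (Icc a b)) (hp : Tr (α a) (α b) p) :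
    ∃ u ∈ Icc a b, dist p (α u) ≤ D * k + l := by
  induction k generalizing a b p with
  | zero =>
    refine ⟨a, left_mem_Icc.2 hab, ?_⟩
    have hstep : dist (α a) (α b) ≤ l := by
      refine hα a (left_mem_Icc.2 hab) b (right_mem_Icc.2 hab) ?_
      rwa [abs_sub_comm, abs_of_nonneg (sub_nonneg.2 hab), ← pow_zero 2]
    simpa [dist_comm] using (h.dist_le hp).trans hstep
  | succ k ih =>
    rw [pow_succ] at hk
    obtain ⟨q, u, hu, hpq, hqu⟩ :
        ∃ q, ∃ u ∈ Icc a b, dist p q ≤ D ∧ dist q (α u) ≤ D * k + l := by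
      rcases h.thin hp (α ((a + b) / 2)) with ⟨q, hq, hpq⟩ | ⟨q, hq, hpq⟩
      · have hsub : Icc a ((a + b) / 2) ⊆ Icc a b := Icc_subset_Icc_right (by linarith)
        obtain ⟨u, hu, hqu⟩ := ih (by linarith) (by linarith) (hα.mono hsub) hq
        exact ⟨q, u, hsub hu, hpq, hqu⟩
      · have hsub : Icc ((a + b) / 2) b ⊆ Icc a b := Icc_subset_Icc_left (by linarith)
        obtain ⟨u, hu, hqu⟩ := ih (by linarith) (by linarith) (hα.mono hsub) hq
        exact ⟨q, u, hsub hu, hpq, hqu⟩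
    refine ⟨u, hu, ?_⟩
    push_cast
    linarith [dist_triangle p q (α u)]

lemma ThinTriangles.exists_dist_le_dist_div_add (h : ThinTriangles D Tr) (hD : 0 ≤ D)
    (hl : 0 ≤ l) {τ : ℝ → ℝ} (hτ : Tendsto (fun t => τ t / Real.log t) atTop atTop) :
    ∃ K, 0 ≤ K ∧ ∀ (α : ℝ → X) (a b : ℝ) (p : X), a ≤ b → BoundedStepsOn α l (Icc a b) →
      τ |a - b| ≤ dist (α a) (α b) → Tr (α a) (α b) p →
      ∃ u ∈ Icc a b, dist p (α u) ≤ dist (α a) (α b) / 8 + K := by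
  obtain ⟨K, hK, hpow⟩ := exists_two_pow_of_tendsto_div_log hτ (A := 8 * D) (by positivity)
  refine ⟨K / 8 + l, by positivity, fun α a b p hab hα hlow hp => ?_⟩
  obtain ⟨k, hk, hDk⟩ := hpow _ _ dist_nonneg hlow
  obtain ⟨u, hu, hpu⟩ :=
    h.exists_dist_le_mul_add hab ((le_abs_self _).trans (by rwa [abs_sub_comm])) hα hp
  exact ⟨u, hu, by linarith⟩

lemma IsEscapeDist.le_of_dist_le {B : ℝ} (hM : IsEscapeDist Tr α I M) (h : ThinTriangles D Tr)
    (hB : ∀ s ∈ I, ∀ t ∈ I, dist (α s) (α t) ≤ B) : M ≤ B := by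
  obtain ⟨a, ha, b, hb, hab, p, hp, hfar⟩ := hM
  calc M ≤ dist p (α a) := hfar a (left_mem_Icc.2 hab)
    _ = dist (α a) p := dist_comm _ _
    _ ≤ dist (α a) (α b) := h.dist_le hp
    _ ≤ B := hB a ha b hb

lemma ThinTriangles.isEscapeDist_sub (h : ThinTriangles D Tr) (ha : a ∈ I) (hb : b ∈ I)
    (hab : a ≤ b) (hq : Tr (α a) (α b) q) (hpq : dist p q ≤ δ) (hδ : δ < dist p (α a))
    (hfar : a = b ∨ ∀ t ∈ Icc a b, r ≤ dist p (α t)) : IsEscapeDist Tr α I (r - δ) := by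
  rcases hfar with rfl | hfar
  · have hqa : dist q (α a) ≤ 0 := by simpa [dist_comm] using h.dist_le hq
    linarith [dist_triangle p q (α a)]
  · exact ⟨a, ha, b, hb, hab, q, hq, fun t ht => by
      linarith [hfar t ht, dist_triangle p q (α t)]⟩

lemma ThinTriangles.exists_isEscapeDist_add_one_le (h : ThinTriangles D Tr) (hI : I.OrdConnected)
    (hα : BoundedStepsOn α l I) (hK : 0 ≤ K)
    (hclose : ∀ a ∈ I, ∀ b ∈ I, a ≤ b → ∀ p, Tr (α a) (α b) p →
      ∃ u ∈ Icc a b, dist p (α u) ≤ dist (α a) (α b) / 8 + K)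
    (hM : IsEscapeDist Tr α I M) (hlarge : 4 * D + l + 2 * K + 1 ≤ M) :
    ∃ M', M + 1 ≤ M' ∧ IsEscapeDist Tr α I M' := by
  obtain ⟨a, ha, b, hb, hab, p, hp, hfar⟩ := hM
  have hl : 0 ≤ l := by simpa using hα a ha a ha (by simp)
  have hD : 0 ≤ D := h.nonneg hp
  by_cases hnear : ∃ t ∈ Icc a b, dist p (α t) ≤ 2 * M
  swap
  · push Not at hnear
    exact ⟨2 * M, by linarith, a, ha, b, hb, hab, p, hp, fun t ht => (hnear t ht).le⟩
  have hdist : BoundedStepsOn (fun t => dist p (α t)) l (Icc a b) :=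
    (hα.mono (hI.out ha hb)).dist_left p
  obtain ⟨m, hm, hpm, hfirst⟩ := hdist.exists_first_le hnear
  obtain ⟨n, hn, hpn, hlast⟩ := (hdist.mono (Icc_subset_Icc_left hm.1)).exists_last_le
    ⟨m, left_mem_Icc.2 hm.2, hpm⟩
  have hmI : m ∈ I := hI.out ha hb hm
  have hnab : n ∈ Icc a b := ⟨hm.1.trans hn.1, hn.2⟩
  have hnI : n ∈ I := hI.out ha hb hnab
  rcases h.thin_quadrilateral hp (α m) (α n) with
    ⟨q, hq, hpq⟩ | ⟨q, hq, hpq⟩ | ⟨q, hq, hpq⟩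
  · exact ⟨2 * M - l - D, by linarith, h.isEscapeDist_sub ha hmI hm.1 hq hpq
      (by linarith [hfar a (left_mem_Icc.2 hab)]) hfirst⟩
  · exfalso
    obtain ⟨u, hu, hqu⟩ := hclose m hmI n hnI hn.1 q hq
    have hMu : M ≤ dist p (α u) := hfar u ⟨hm.1.trans hu.1, hu.2.trans hn.2⟩
    have hmn : dist (α m) (α n) ≤ 4 * M + 3 * l := by
      linarith [dist_triangle_left (α m) (α n) p]
    linarith [dist_triangle p q (α u)]
  · rw [add_sub_cancel_right] at hlast
    exact ⟨2 * M - 2 * D, by linarith, h.isEscapeDist_sub hnI hb hn.2 hq hpq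
      (by linarith [hfar n hnab]) hlast⟩

lemma ThinTriangles.exists_dist_lt (h : ThinTriangles D Tr) (hI : I.OrdConnected)
    (hα : BoundedStepsOn α l I) (hbdd : Bornology.IsBounded (α '' I)) (hK : 0 ≤ K)
    (hclose : ∀ a ∈ I, ∀ b ∈ I, a ≤ b → ∀ p, Tr (α a) (α b) p →
      ∃ u ∈ Icc a b, dist p (α u) ≤ dist (α a) (α b) / 8 + K)
    (ha : a ∈ I) (hb : b ∈ I) (hab : a ≤ b) (hp : Tr (α a) (α b) p) :
    ∃ t ∈ Icc a b, dist p (α t) < 4 * D + l + 2 * K + 1 := by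
  by_contra! hfar
  obtain ⟨B, hB⟩ := isBounded_iff.1 hbdd
  have hBdd : BddAbove {M | IsEscapeDist Tr α I M} :=
    ⟨B, fun M hM => hM.le_of_dist_le h fun s hs t ht =>
      hB (mem_image_of_mem α hs) (mem_image_of_mem α ht)⟩
  refine (lt_of_forall_exists_add_one_le hBdd (fun M hM hlarge => ?_)
    ⟨a, ha, b, hb, hab, p, hp, hfar⟩).false
  exact h.exists_isEscapeDist_add_one_le hI hα hK hclose hM hlarge

end ThinTriangles

section TransientPoints

variable {X : Type*} [MetricSpace X] {ι : Type*} {P : ι → Set X} {μ R D : ℝ}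

lemma IsTransientPoint.dist_left_le {x y p : X} (hp : IsTransientPoint P μ R x y p) :
    dist x p ≤ dist x y := by
  obtain ⟨γ, ⟨hx, -, hγ⟩, s, ⟨hs, -⟩, rfl⟩ := hp
  calc dist x (γ s) = |0 - s| := by rw [← hγ 0 (left_mem_Icc.2 dist_nonneg) s hs, hx]
    _ = s := by rw [zero_sub, abs_neg, abs_of_nonneg hs.1]
    _ ≤ dist x y := hs.2

lemma RelRips.thinTriangles [GeodesicSpace X] (h : RelRips P μ R D) :
    ThinTriangles D (IsTransientPoint P μ R) where
  dist_le := IsTransientPoint.dist_left_le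
  thin := by
    rintro x y _ ⟨γ, hγ, s, hs, rfl⟩ z
    obtain ⟨γ₁, hγ₁⟩ := GeodesicSpace.exists_geod x z
    obtain ⟨γ₂, hγ₂⟩ := GeodesicSpace.exists_geod z y
    exact (h x y z γ γ₁ γ₂ hγ hγ₁ hγ₂ s hs).imp
      (fun ⟨t, ht, hst⟩ => ⟨γ₁ t, ⟨γ₁, hγ₁, t, ht, rfl⟩, hst⟩)
      (fun ⟨t, ht, hst⟩ => ⟨γ₂ t, ⟨γ₂, hγ₂, t, ht, rfl⟩, hst⟩)

end TransientPoints

theorem transient_uniformly_close_to_subexp_paths_general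
    {X : Type u} [MetricSpace X] [GeodesicSpace X] {ι : Type w} {P : ι → Set X}
    {μ R D : ℝ} (hD : 0 ≤ D) (hRips : RelRips P μ R D)
    {L : ℝ} {τ : ℝ → ℝ} (hL : 0 ≤ L) (hτ : Tendsto (fun t => τ t / Real.log t) atTop atTop) :
    ∃ E : ℝ, 0 < E ∧
      ∀ (x y : X) (γ : ℝ → X), IsGeodesicFrom γ x y →
      ∀ (α : ℝ → X) (T : ℝ), 0 ≤ T → α 0 = x → α T = y →
        (∀ s ∈ Icc 0 T, ∀ t ∈ Icc 0 T,
          dist (α s) (α t) ≤ L * |s - t| + L ∧ τ (|s - t|) ≤ dist (α s) (α t)) →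
        ∀ s : ℝ, TransientParam P μ R γ 0 (dist x y) s →
          ∃ t ∈ Icc 0 T, dist (γ s) (α t) ≤ E := by
  have hthin : ThinTriangles D (IsTransientPoint P μ R) := hRips.thinTriangles
  obtain ⟨K, hK, hclose⟩ := hthin.exists_dist_le_dist_div_add hD (l := 2 * L) (by positivity) hτ
  refine ⟨4 * D + 2 * L + 2 * K + 1, by positivity, ?_⟩
  rintro _ _ γ hγ α T hT rfl rfl hα s hs
  have hlip : ∀ s ∈ Icc 0 T, ∀ t ∈ Icc 0 T, dist (α s) (α t) ≤ L * |s - t| + L :=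
    fun s hs t ht => (hα s hs t ht).1
  have hsteps : BoundedStepsOn α (2 * L) (Icc 0 T) := boundedStepsOn_of_dist_le hL hlip
  have hbdd := isBounded_image_of_dist_le hL (isBounded_Icc 0 T) hlip
  obtain ⟨t, ht, hlt⟩ := hthin.exists_dist_lt ordConnected_Icc hsteps hbdd hK
    (fun a ha b hb hab p hp => hclose α a b p hab
      (hsteps.mono (ordConnected_Icc.out ha hb)) (hα a ha b hb).2 hp)
    (left_mem_Icc.2 hT) (right_mem_Icc.2 hT) hT ⟨γ, hγ, s, hs, rfl⟩
  exact ⟨t, ht, hlt.le⟩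

/-- **Proposition 4.7.** In a relatively hyperbolic space `(X, P)` with
transient-set constants `μ, R` satisfying the relative Rips condition, every
transient point of a geodesic `γ` lies within uniformly bounded distance `E`
of the image of any subexponentially distorted coarsely Lipschitz map
`α : [0,T] → X` with the same endpoints as `γ`; `E` depends only on the
distortion data `(L, τ)` and on `(X, P)`, and not on `γ`, `α`, `T`. -/
theorem transient_uniformly_close_to_subexp_paths
    {X : Type u} [MetricSpace X] {ι : Type w} {P : ι → Set X}
    (RH : RelHypSpace X P) (μ R D : ℝ) (hμ : 0 ≤ μ) (hR : 0 ≤ R) (hD : 0 ≤ D)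
    (hRips : RelRips P μ R D) :
    ∀ (L : ℝ) (τ : ℝ → ℝ), 0 < L →
      Filter.Tendsto (fun t => τ t / Real.log t) Filter.atTop Filter.atTop →
      ∃ E : ℝ, 0 < E ∧
        ∀ (x y : X) (γ : ℝ → X), IsGeodesicFrom γ x y →
        ∀ (α : ℝ → X) (T : ℝ), 0 ≤ T → α 0 = x → α T = y →
          (∀ s ∈ Set.Icc 0 T, ∀ t ∈ Set.Icc 0 T,
            dist (α s) (α t) ≤ L * |s - t| + L ∧ τ (|s - t|) ≤ dist (α s) (α t)) →
          ∀ s : ℝ, TransientParam P μ R γ 0 (dist x y) s →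
            ∃ t ∈ Set.Icc 0 T, dist (γ s) (α t) ≤ E := by
  have := RH.geodX
  exact fun _ _ hL hτ => transient_uniformly_close_to_subexp_paths_general hD hRips hL.le hτ

end RelHypPaper
end
end
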